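/- arXiv:1512.07714 — 4 statements merged into one kernel-verified Lean document; each statement's English description precedes it below -/
import Mathlib

section
/- Let X be a locally compact Hausdorff space, F a complex Banach space, and P : C₀(X) → F a bounded orthogonally additive n-homogeneous polynomial. Then there exists a bounded linear operator T : C₀(X) → F such that P(f) = T(fⁿ) for all f ∈ C₀(X). -/
open scoped ZeroAtInfty

/-- `P : E → F` is a bounded `n`-homogeneous polynomial: `P x = L(x,…,x)` for a bounded
symmetric `n`-linear map `L`. -/
def IsHomogPolynomial {E F : Type*} [NormedAddCommGroup E] [NormedSpace ℂ E]
    [NormedAddCommGroup F] [NormedSpace ℂ F] (n : ℕ) (P : E → F) : Prop :=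
  ∃ L : ContinuousMultilinearMap ℂ (fun _ : Fin n => E) F,
    (∀ (v : Fin n → E) (σ : Equiv.Perm (Fin n)), (L fun i => v (σ i)) = L v) ∧
    ∀ x : E, P x = L fun _ => x

open scoped BoundedContinuousFunction

theorem toggle_sum {n : ℕ} {F : Type*} [AddCommGroup F] [Module ℂ F] (G : Finset (Fin n) → F)
    (b : Fin n) (hG : ∀ S, b ∉ S → G (insert b S) = G S) :
    ∑ S : Finset (Fin n), (-1 : ℂ) ^ S.card • G S = 0 := by
  classical
  refine Finset.sum_involution (fun S _ => if b ∈ S then S.erase b else insert b S) ?_ ?_ ?_ ?_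
  · intro S _
    by_cases h : b ∈ S
    · have h1 := hG (S.erase b) (Finset.notMem_erase b S)
      rw [Finset.insert_erase h] at h1
      have h2 := Finset.card_erase_add_one h
      simp only [h, if_true, h1]
      rw [← h2, ← add_smul, pow_succ]; simp
    · simp only [h, if_false, hG S h, Finset.card_insert_of_notMem h]
      rw [← add_smul, pow_succ]; simp
  · intro S _ _ hS
    by_cases h : b ∈ S
    · simp only [h, if_true] at hS
      have h2 := Finset.notMem_erase b S
      rw [hS] at h2
      exact h2 h
    · simp only [h, if_false] at hS
      have h2 := Finset.mem_insert_self b S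
      rw [hS] at h2
      exact h h2
  · intro S _; exact Finset.mem_univ _
  · intro S _
    by_cases h : b ∈ S
    · simp [h, Finset.insert_erase h]
    · simp [h, Finset.erase_insert h]

theorem polarization_id {n : ℕ} {E F : Type*} [NormedAddCommGroup E] [NormedSpace ℂ E]
    [NormedAddCommGroup F] [NormedSpace ℂ F]
    (L : ContinuousMultilinearMap ℂ (fun _ : Fin n => E) F)
    (hs : ∀ (v : Fin n → E) (σ : Equiv.Perm (Fin n)), (L fun i => v (σ i)) = L v)
    (f : Fin n → E) :
    ∑ S : Finset (Fin n), (-1 : ℂ) ^ S.card • L (fun _ => ∑ i ∈ S, f i)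
      = ((-1 : ℂ) ^ n * (n.factorial : ℂ)) • L f := by
  classical
  have h1 : ∀ S : Finset (Fin n), L (fun _ => ∑ i ∈ S, f i)
      = ∑ r : Fin n → Fin n, if ∀ k, r k ∈ S then L (fun k => f (r k)) else 0 := by
    intro S
    have := L.toMultilinearMap.map_sum_finset (fun _ i => f i) (fun _ => S)
    simp only [ContinuousMultilinearMap.coe_coe] at this
    rw [this, ← Finset.sum_filter]
    apply Finset.sum_congr _ (fun _ _ => rfl)
    ext r; simp [Fintype.mem_piFinset]
  simp_rw [h1, Finset.smul_sum]
  rw [Finset.sum_comm]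
  have h2 : ∀ r : Fin n → Fin n, (∑ S : Finset (Fin n), (-1 : ℂ) ^ S.card •
      (if ∀ k, r k ∈ S then L (fun k => f (r k)) else 0))
      = if Function.Bijective r then (-1 : ℂ) ^ n • L f else 0 := by
    intro r
    by_cases hr : Function.Bijective r
    · rw [if_pos hr, Finset.sum_eq_single Finset.univ]
      · simp only [Finset.mem_univ, implies_true, if_true, Finset.card_univ, Fintype.card_fin]
        congr 1
        exact hs f (Equiv.ofBijective r hr)
      · intro S _ hS
        rw [if_neg, smul_zero]
        intro h
        apply hS
        ext b; obtain ⟨k, rfl⟩ := hr.2 b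
        simp [h k]
      · simp
    · rw [if_neg hr]
      have : ¬ Function.Surjective r := fun h => hr (Finite.surjective_iff_bijective.1 h)
      simp only [Function.Surjective, not_forall, not_exists] at this
      obtain ⟨b, hb⟩ := this
      apply toggle_sum _ b
      intro S _
      simp [Finset.mem_insert, hb]
  simp_rw [h2]
  rw [← Finset.sum_filter, Finset.sum_const]
  have h3 : (Finset.univ.filter fun r : Fin n → Fin n => Function.Bijective r).card
      = n.factorial := by
    rw [← Fintype.card_subtype]
    have := Fintype.card_perm (α := Fin n)
    rw [Fintype.card_fin] at this
    rw [← this]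
    exact Fintype.card_congr (Equiv.ofBijective
      (fun r : {r : Fin n → Fin n // Function.Bijective r} => Equiv.ofBijective r.1 r.2)
      ⟨fun a b h => Subtype.ext (funext fun x => DFunLike.congr_fun h x),
        fun σ => ⟨⟨σ, σ.bijective⟩, by ext; simp⟩⟩)
  rw [h3, ← Nat.cast_smul_eq_nsmul ℂ, smul_smul, mul_comm]

/-- If the index set splits in two nonempty mutually orthogonal groups, `L` vanishes. -/
theorem group_orth {X : Type*} [TopologicalSpace X] {F : Type*} [NormedAddCommGroup F]
    [NormedSpace ℂ F] {n : ℕ} (L : ContinuousMultilinearMap ℂ (fun _ : Fin n => C₀(X, ℂ)) F)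
    (hs : ∀ (v : Fin n → C₀(X, ℂ)) (σ : Equiv.Perm (Fin n)), (L fun i => v (σ i)) = L v)
    (ho : ∀ f g : C₀(X, ℂ), f * g = 0 → L (fun _ => f + g) = L (fun _ => f) + L (fun _ => g))
    (f : Fin n → C₀(X, ℂ)) (A : Finset (Fin n)) (a b : Fin n) (ha : a ∈ A) (hb : b ∉ A)
    (hf : ∀ i ∈ A, ∀ j, j ∉ A → f i * f j = 0) : L f = 0 := by
  classical
  have key := polarization_id L hs f
  have h1 : ∀ S : Finset (Fin n), L (fun _ => ∑ i ∈ S, f i)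
      = L (fun _ => ∑ i ∈ S.filter (· ∈ A), f i) + L (fun _ => ∑ i ∈ S.filter (· ∉ A), f i) := by
    intro S
    rw [← ho]
    · rw [Finset.sum_filter_add_sum_filter_not]
    · rw [Finset.sum_mul_sum]
      refine Finset.sum_eq_zero fun i hi => Finset.sum_eq_zero fun j hj => ?_
      exact hf i (Finset.mem_filter.1 hi).2 j (Finset.mem_filter.1 hj).2
  rw [Finset.sum_congr rfl (fun S _ => by rw [h1 S, smul_add]), Finset.sum_add_distrib] at key
  rw [toggle_sum (fun S => L (fun _ => ∑ i ∈ S.filter (· ∈ A), f i)) b,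
    toggle_sum (fun S => L (fun _ => ∑ i ∈ S.filter (· ∉ A), f i)) a, add_zero] at key
  · refine (smul_eq_zero.1 key.symm).resolve_left ?_
    exact mul_ne_zero (pow_ne_zero _ (by norm_num)) (by exact_mod_cast n.factorial_ne_zero)
  · intro S _; simp [Finset.filter_insert, ha]
  · intro S _; simp [Finset.filter_insert, hb]

/-- Multiplication of an element of `C₀(X, ℂ)` by a bounded continuous real function. -/
noncomputable def bsm {X : Type*} [TopologicalSpace X] (a : X →ᵇ ℝ) (f : C₀(X, ℂ)) :
    C₀(X, ℂ) where
  toFun x := (a x : ℂ) * f x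
  continuous_toFun := by
    have := a.continuous
    have := f.continuous
    fun_prop
  zero_at_infty' := by
    have h : Filter.Tendsto (fun x => ‖a‖ * ‖f x‖) (Filter.cocompact X) (nhds 0) := by
      have := (zero_at_infty f).norm.const_mul ‖a‖
      simpa using this
    refine squeeze_zero_norm (fun x => ?_) h
    rw [norm_mul]
    gcongr
    simpa using a.norm_coe_le_norm x

theorem bsm_apply {X : Type*} [TopologicalSpace X] (a : X →ᵇ ℝ) (f : C₀(X, ℂ)) (x : X) :
    bsm a f x = (a x : ℂ) * f x := rfl

theorem C0_norm_le {X : Type*} [TopologicalSpace X] {f : C₀(X, ℂ)} {C : ℝ} (hC : 0 ≤ C)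
    (h : ∀ x, ‖f x‖ ≤ C) : ‖f‖ ≤ C := by
  rw [← ZeroAtInftyContinuousMap.norm_toBCF_eq_norm]
  exact (BoundedContinuousFunction.norm_le hC).2 h

theorem C0_norm_coe_le {X : Type*} [TopologicalSpace X] (f : C₀(X, ℂ)) (x : X) : ‖f x‖ ≤ ‖f‖ := by
  rw [← ZeroAtInftyContinuousMap.norm_toBCF_eq_norm]
  exact BoundedContinuousFunction.norm_coe_le_norm f.toBCF x

theorem bsm_norm_le {X : Type*} [TopologicalSpace X] (a : X →ᵇ ℝ) (f : C₀(X, ℂ)) :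
    ‖bsm a f‖ ≤ ‖a‖ * ‖f‖ := by
  refine C0_norm_le (by positivity) fun x => ?_
  rw [bsm_apply, norm_mul]
  have h1 := a.norm_coe_le_norm x
  have h2 := C0_norm_coe_le f x
  gcongr
  simpa using h1

/-- The ramp function of `u` from level `a` to level `b`. -/
noncomputable def ramp {X : Type*} [TopologicalSpace X] (u : C(X, ℝ)) (a b : ℝ) : X →ᵇ ℝ :=
  BoundedContinuousFunction.ofNormedAddCommGroup
    (fun x => max 0 (min 1 ((u x - a) / (b - a)))) (by fun_prop) 1 (fun x => by
      rw [Real.norm_of_nonneg (le_max_left _ _)]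
      exact max_le zero_le_one (min_le_left _ _))

theorem ramp_apply {X : Type*} [TopologicalSpace X] (u : C(X, ℝ)) (a b : ℝ) (x : X) :
    ramp u a b x = max 0 (min 1 ((u x - a) / (b - a))) := rfl

theorem ramp_zero {X : Type*} [TopologicalSpace X] (u : C(X, ℝ)) {a b : ℝ} (hab : a < b) (x : X)
    (hx : u x ≤ a) : ramp u a b x = 0 := by
  rw [ramp_apply]
  have : (u x - a) / (b - a) ≤ 0 := div_nonpos_of_nonpos_of_nonneg (by linarith) (by linarith)
  exact max_eq_left ((min_le_right _ _).trans this)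

theorem ramp_one {X : Type*} [TopologicalSpace X] (u : C(X, ℝ)) {a b : ℝ} (hab : a < b) (x : X)
    (hx : b ≤ u x) : ramp u a b x = 1 := by
  rw [ramp_apply]
  have : 1 ≤ (u x - a) / (b - a) := by rw [le_div_iff₀ (by linarith)]; linarith
  rw [min_eq_left this]; simp

theorem ramp_mem {X : Type*} [TopologicalSpace X] (u : C(X, ℝ)) (a b : ℝ) (x : X) :
    0 ≤ ramp u a b x ∧ ramp u a b x ≤ 1 :=
  ⟨le_max_left _ _, max_le zero_le_one (min_le_left _ _)⟩

theorem sep_zero {X : Type*} [TopologicalSpace X] {F : Type*} [NormedAddCommGroup F]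
    [NormedSpace ℂ F] {n : ℕ} (L : ContinuousMultilinearMap ℂ (fun _ : Fin n => C₀(X, ℂ)) F)
    (hs : ∀ (v : Fin n → C₀(X, ℂ)) (σ : Equiv.Perm (Fin n)), (L fun i => v (σ i)) = L v)
    (ho : ∀ f g : C₀(X, ℂ), f * g = 0 → L (fun _ => f + g) = L (fun _ => f) + L (fun _ => g))
    (u : C(X, ℝ)) (i₀ j₀ : Fin n) (U : Finset (Fin n)) :
    ∀ (f : Fin n → C₀(X, ℂ)) (A : Finset (Fin n)) (a b : ℝ), a < b → i₀ ∈ A → j₀ ∉ A → j₀ ∉ U →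
      Disjoint A U → (∀ i ∈ A, ∀ x, f i x ≠ 0 → b ≤ u x) →
      (∀ j, j ∉ A → j ∉ U → ∀ x, f j x ≠ 0 → u x ≤ a) → L f = 0 := by
  classical
  induction U using Finset.induction_on with
  | empty =>
    intro f A a b hab hi hj _ _ hA hB
    refine group_orth L hs ho f A i₀ j₀ hi hj fun i hi j hj => ?_
    ext x
    simp only [ZeroAtInftyContinuousMap.mul_apply, ZeroAtInftyContinuousMap.zero_apply]
    by_contra h
    rw [mul_eq_zero, not_or] at h
    have := hA i hi x h.1
    have := hB j hj (by simp) x h.2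
    linarith
  | insert k U hk ih =>
    intro f A a b hab hi hj hjU hd hA hB
    rw [Finset.disjoint_insert_right] at hd
    simp only [Finset.mem_insert, not_or] at hjU hB
    set a' := (2 * a + b) / 3 with ha'
    set b' := (a + 2 * b) / 3 with hb'
    have h1 : a < a' := by rw [ha']; linarith
    have h2 : a' < b' := by rw [ha', hb']; linarith
    have h3 : b' < b := by rw [hb']; linarith
    set p := ramp u a' b' with hp
    have hdec : f k = bsm p (f k) + bsm (1 - p) (f k) := by
      ext x
      simp [bsm_apply]
      ring
    have hL : L f = L (Function.update f k (bsm p (f k)))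
        + L (Function.update f k (bsm (1 - p) (f k))) := by
      rw [← L.map_update_add, ← hdec, Function.update_eq_self]
    have hik : i₀ ≠ k := fun h => hd.1 (h ▸ hi)
    rw [hL, ih _ (insert k A) a a' h1, ih _ A b' b h3 hi hj hjU.2 hd.2, add_zero]
    · intro i hi' x hx
      have : i ≠ k := fun h => hd.1 (h ▸ hi')
      rw [Function.update_of_ne this] at hx
      exact hA i hi' x hx
    · intro j hj' hjU' x hx
      by_cases hjk : j = k
      · subst hjk
        rw [Function.update_self, bsm_apply] at hx
        by_contra hcon
        apply hx
        have : p x = 1 := ramp_one u h2 x (not_le.1 hcon).le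
        simp [this]
      · rw [Function.update_of_ne hjk] at hx
        exact (hB j hj' ⟨hjk, hjU'⟩ x hx).trans (by linarith)
    · exact Finset.mem_insert_of_mem hi
    · simp [Finset.mem_insert, hjU.1, hj]
    · exact hjU.2
    · rw [Finset.disjoint_insert_left]; exact ⟨hk, hd.2⟩
    · intro i hi' x hx
      by_cases hjk : i = k
      · subst hjk
        rw [Function.update_self, bsm_apply] at hx
        by_contra hcon
        apply hx
        have : p x = 0 := ramp_zero u h2 x (not_le.1 hcon).le
        simp [this]
      · rw [Function.update_of_ne hjk] at hx
        exact (by linarith : a' ≤ b).trans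
          (hA i ((Finset.mem_insert.1 hi').resolve_left hjk) x hx)
    · intro j hj' hjU' x hx
      rw [Finset.mem_insert, not_or] at hj'
      rw [Function.update_of_ne hj'.1] at hx
      exact hB j hj'.2 ⟨hj'.1, hjU'⟩ x hx

/-- Orthosymmetry. -/
theorem orthosymm {X : Type*} [TopologicalSpace X] {F : Type*} [NormedAddCommGroup F]
    [NormedSpace ℂ F] {n : ℕ} (L : ContinuousMultilinearMap ℂ (fun _ : Fin n => C₀(X, ℂ)) F)
    (hs : ∀ (v : Fin n → C₀(X, ℂ)) (σ : Equiv.Perm (Fin n)), (L fun i => v (σ i)) = L v)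
    (ho : ∀ f g : C₀(X, ℂ), f * g = 0 → L (fun _ => f + g) = L (fun _ => f) + L (fun _ => g))
    (f : Fin n → C₀(X, ℂ)) (i j : Fin n) (hij : i ≠ j) (hf : f i * f j = 0) : L f = 0 := by
  classical
  set u : C(X, ℝ) := ⟨fun x => ‖f i x‖, (f i).continuous.norm⟩ with hu
  set g : ℕ → C₀(X, ℂ) := fun N => bsm (ramp u (1 / (N + 1 : ℝ)) (2 / (N + 1 : ℝ))) (f i) with hg
  have hlt : ∀ N : ℕ, 1 / (N + 1 : ℝ) < 2 / (N + 1 : ℝ) := fun N => by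
    gcongr; norm_num
  have h0 : ∀ N, L (Function.update f i (g N)) = 0 := by
    intro N
    have hN : (0 : ℝ) < 1 / (N + 1 : ℝ) := by positivity
    refine sep_zero L hs ho u i j (Finset.univ \ {i, j}) _ {i} 0 _ hN (by simp)
      (by simpa using hij.symm) (by simp) (by simp) ?_ ?_
    · intro k hk x hx
      rw [Finset.mem_singleton] at hk
      subst hk
      rw [Function.update_self, hg, bsm_apply] at hx
      by_contra hcon
      apply hx
      rw [ramp_zero u (hlt N) x (not_le.1 hcon).le]; simp
    · intro k hk hkU x hx
      have hk1 : k ≠ i := by simpa using hk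
      have hk2 : k = j := by simpa [hk1] using hkU
      subst hk2
      rw [Function.update_of_ne hk1] at hx
      have := DFunLike.congr_fun hf x
      simp only [ZeroAtInftyContinuousMap.mul_apply, ZeroAtInftyContinuousMap.zero_apply] at this
      simp [hu, (mul_eq_zero.1 this).resolve_right hx]
  have hlim : Filter.Tendsto g Filter.atTop (nhds (f i)) := by
    rw [tendsto_iff_norm_sub_tendsto_zero]
    have hz : Filter.Tendsto (fun N : ℕ => 2 * (1 / (N + 1 : ℝ))) Filter.atTop (nhds 0) := by
      simpa using (tendsto_one_div_add_atTop_nhds_zero_nat (𝕜 := ℝ)).const_mul 2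
    refine squeeze_zero (fun _ => norm_nonneg _) (fun N => ?_) hz
    refine C0_norm_le (by positivity) fun x => ?_
    have hr := ramp_mem u (1 / (N + 1 : ℝ)) (2 / (N + 1 : ℝ)) x
    have h1 : (g N - f i) x
        = ((ramp u (1 / (N + 1 : ℝ)) (2 / (N + 1 : ℝ)) x - 1 : ℝ) : ℂ) * f i x := by
      simp [hg, bsm_apply, sub_mul]
    rw [h1, norm_mul, Complex.norm_real]
    by_cases hx : 2 / (N + 1 : ℝ) ≤ u x
    · rw [ramp_one u (hlt N) x hx]; simp; positivity
    · have h2 : ‖f i x‖ ≤ 2 * (1 / (N + 1 : ℝ)) := by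
        have : ‖f i x‖ ≤ 2 / (N + 1 : ℝ) := (not_le.1 hx).le
        rwa [← div_eq_mul_one_div]
      have h3 : ‖ramp u (1 / (N + 1 : ℝ)) (2 / (N + 1 : ℝ)) x - 1‖ ≤ 1 := by
        rw [Real.norm_eq_abs, abs_le]; constructor <;> linarith
      calc _ ≤ 1 * (2 * (1 / (N + 1 : ℝ))) := by gcongr
        _ = _ := one_mul _
  have hc : Filter.Tendsto (fun N => L (Function.update f i (g N))) Filter.atTop
      (nhds (L (Function.update f i (f i)))) := by
    refine (L.cont.tendsto _).comp ?_
    exact tendsto_const_nhds.update i hlim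
  rw [Function.update_eq_self] at hc
  simp_rw [h0] at hc
  exact (tendsto_nhds_unique hc tendsto_const_nhds)

/-- clamped translate of `u` -/
noncomputable def rr {X : Type*} [TopologicalSpace X] (u : X →ᵇ ℝ) (t : ℝ) : X →ᵇ ℝ :=
  BoundedContinuousFunction.ofNormedAddCommGroup
    (fun x => max 0 (min 1 (u x - t))) (by have := u.continuous; fun_prop) 1 (fun x => by
      rw [Real.norm_of_nonneg (le_max_left _ _)]
      exact max_le zero_le_one (min_le_left _ _))

theorem rr_apply {X : Type*} [TopologicalSpace X] (u : X →ᵇ ℝ) (t : ℝ) (x : X) :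
    rr u t x = max 0 (min 1 (u x - t)) := rfl

theorem rr_zero {X : Type*} [TopologicalSpace X] (u : X →ᵇ ℝ) {t : ℝ} {x : X} (h : u x ≤ t) :
    rr u t x = 0 := by
  rw [rr_apply]; exact max_eq_left ((min_le_right _ _).trans (by linarith))

theorem rr_one {X : Type*} [TopologicalSpace X] (u : X →ᵇ ℝ) {t : ℝ} {x : X} (h : t + 1 ≤ u x) :
    rr u t x = 1 := by
  rw [rr_apply, min_eq_left (by linarith)]; simp

theorem rr_mem {X : Type*} [TopologicalSpace X] (u : X →ᵇ ℝ) (t : ℝ) (x : X) :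
    0 ≤ rr u t x ∧ rr u t x ≤ 1 :=
  ⟨le_max_left _ _, max_le zero_le_one (min_le_left _ _)⟩

theorem rr_anti {X : Type*} [TopologicalSpace X] (u : X →ᵇ ℝ) {s t : ℝ} (h : s ≤ t) (x : X) :
    rr u t x ≤ rr u s x := by
  rw [rr_apply, rr_apply]; gcongr

/-- hat functions -/
noncomputable def ee {X : Type*} [TopologicalSpace X] (u : X →ᵇ ℝ) (t : ℝ) : X →ᵇ ℝ :=
  rr u (t - 1) - rr u t

theorem ee_apply {X : Type*} [TopologicalSpace X] (u : X →ᵇ ℝ) (t : ℝ) (x : X) :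
    ee u t x = rr u (t - 1) x - rr u t x := rfl

theorem ee_mul {X : Type*} [TopologicalSpace X] (u : X →ᵇ ℝ) {s t : ℝ} (h : s + 2 ≤ t) :
    ee u s * ee u t = 0 := by
  ext x
  simp only [BoundedContinuousFunction.coe_mul, Pi.mul_apply, ee_apply,
    BoundedContinuousFunction.coe_zero, Pi.zero_apply]
  rcases le_total (u x) (t - 1) with h1 | h1
  · rw [rr_zero u h1, rr_zero u (show u x ≤ t by linarith)]; simp
  · rw [rr_one u (show s - 1 + 1 ≤ u x by linarith), rr_one u (show s + 1 ≤ u x by linarith)]; simp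

theorem ee_sum_norm {X : Type*} [TopologicalSpace X] (u : X →ᵇ ℝ) (N : ℕ) (J : Finset ℕ)
    (hJ : J ⊆ Finset.range N) (d : ℝ) : ‖∑ j ∈ J, ee u (j + d)‖ ≤ 1 := by
  refine (BoundedContinuousFunction.norm_le zero_le_one).2 fun x => ?_
  have hnn : ∀ j : ℕ, 0 ≤ ee u (j + d) x := fun j => by
    rw [ee_apply, sub_nonneg]; exact rr_anti u (by linarith) x
  rw [BoundedContinuousFunction.coe_sum, Finset.sum_apply,
    Real.norm_of_nonneg (Finset.sum_nonneg fun j _ => hnn j)]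
  calc ∑ j ∈ J, ee u (j + d) x ≤ ∑ j ∈ Finset.range N, ee u (j + d) x :=
        Finset.sum_le_sum_of_subset_of_nonneg hJ fun j _ _ => hnn j
    _ = ∑ j ∈ Finset.range N, ((fun k : ℕ => rr u (k + d - 1) x) j
          - (fun k : ℕ => rr u (k + d - 1) x) (j + 1)) := by
        refine Finset.sum_congr rfl fun j _ => ?_
        simp only [ee_apply]
        congr 3; push_cast; ring
    _ = _ := Finset.sum_range_sub' _ _
    _ ≤ 1 := by
        have h1 := rr_mem u ((0 : ℕ) + d - 1) x
        have h2 := rr_mem u (N + d - 1) x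
        simpa using (sub_le_self _ h2.1).trans h1.2

theorem half_bound {X : Type*} [TopologicalSpace X] {F : Type*} [NormedAddCommGroup F]
    [NormedSpace ℝ F] (β : (X →ᵇ ℝ) →ₗ[ℝ] (X →ᵇ ℝ) →ₗ[ℝ] F) (C : ℝ) (hC0 : 0 ≤ C)
    (hC : ∀ a b, ‖β a b‖ ≤ C * ‖a‖ * ‖b‖) (h0 : ∀ a b, a * b = 0 → β a b = 0)
    (u : X →ᵇ ℝ) (N : ℕ) :
    ‖∑ j ∈ Finset.range N, β (rr u j) (1 - rr u j)‖ ≤ 3 * C := by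
  have h1 : ∀ j : ℕ, β (rr u j) (1 - rr u j) = β (ee u (j + 1)) (ee u (j + 0)) := by
    intro j
    have e1 : rr u j = ee u (j + 1) + rr u (j + 1) := by simp [ee]
    have e2 : 1 - rr u j = ee u (j + 0) + (1 - rr u (j - 1)) := by simp [ee]
    have z1 : β (rr u (j + 1)) (1 - rr u j) = 0 := by
      apply h0
      ext x
      simp only [BoundedContinuousFunction.coe_mul, Pi.mul_apply, BoundedContinuousFunction.coe_sub,
        Pi.sub_apply, BoundedContinuousFunction.coe_one, Pi.one_apply,
        BoundedContinuousFunction.coe_zero, Pi.zero_apply]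
      rcases le_total (u x) (j + 1) with h | h
      · rw [rr_zero u h]; simp
      · rw [rr_one u h]; simp
    have z2 : β (ee u (j + 1)) (1 - rr u (j - 1)) = 0 := by
      apply h0
      ext x
      simp only [BoundedContinuousFunction.coe_mul, Pi.mul_apply, BoundedContinuousFunction.coe_sub,
        Pi.sub_apply, BoundedContinuousFunction.coe_one, Pi.one_apply, ee_apply,
        BoundedContinuousFunction.coe_zero, Pi.zero_apply]
      rcases le_total (u x) j with h | h
      · rw [rr_zero u (show u x ≤ j + 1 - 1 by linarith),
          rr_zero u (show u x ≤ j + 1 by linarith)]; simp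
      · rw [rr_one u (show (j : ℝ) - 1 + 1 ≤ u x by linarith)]; simp
    calc β (rr u j) (1 - rr u j) = β (ee u (j + 1) + rr u (j + 1)) (1 - rr u j) := by rw [← e1]
      _ = β (ee u (j + 1)) (1 - rr u j) := by rw [map_add, LinearMap.add_apply, z1, add_zero]
      _ = β (ee u (j + 1)) (ee u (j + 0) + (1 - rr u (j - 1))) := by rw [← e2]
      _ = _ := by rw [map_add, z2, add_zero]
  rw [Finset.sum_congr rfl fun j _ => h1 j]
  rw [← Finset.sum_fiberwise_of_maps_to (s := Finset.range N) (t := Finset.range 3)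
    (g := fun j => j % 3) (fun j _ => Finset.mem_range.2 (Nat.mod_lt _ (by norm_num)))]
  have h2 : ∀ c ∈ Finset.range 3, ‖∑ j ∈ Finset.range N with j % 3 = c,
      β (ee u (j + 1)) (ee u (j + 0))‖ ≤ C := by
    intro c _
    set J := Finset.filter (fun j => j % 3 = c) (Finset.range N) with hJ
    have h3 : ∑ j ∈ J, β (ee u (j + 1)) (ee u (j + 0))
        = β (∑ j ∈ J, ee u (j + 1)) (∑ j ∈ J, ee u (j + 0)) := by
      rw [map_sum β, LinearMap.sum_apply]
      refine Finset.sum_congr rfl fun j hj => ?_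
      rw [map_sum, Finset.sum_eq_single_of_mem j hj]
      intro k hk hkj
      apply h0
      have hj' := (Finset.mem_filter.1 hj).2
      have hk' := (Finset.mem_filter.1 hk).2
      rcases lt_or_gt_of_ne hkj with h | h
      · rw [mul_comm]
        apply ee_mul
        have : k + 2 ≤ j + 1 := by omega
        have : (k : ℝ) + 2 ≤ j + 1 := by exact_mod_cast this
        linarith
      · apply ee_mul
        have : j + 3 ≤ k := by omega
        have : (j : ℝ) + 3 ≤ k := by exact_mod_cast this
        linarith
    rw [h3]
    refine (hC _ _).trans ?_
    have a1 := ee_sum_norm u N J (Finset.filter_subset _ _) 1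
    have a2 := ee_sum_norm u N J (Finset.filter_subset _ _) 0
    calc _ ≤ C * 1 * 1 := by gcongr
      _ = C := by ring
  refine (norm_sum_le_of_le _ h2).trans ?_
  simp

theorem full_bound {X : Type*} [TopologicalSpace X] {F : Type*} [NormedAddCommGroup F]
    [NormedSpace ℝ F] (β : (X →ᵇ ℝ) →ₗ[ℝ] (X →ᵇ ℝ) →ₗ[ℝ] F) (C : ℝ) (hC0 : 0 ≤ C)
    (hC : ∀ a b, ‖β a b‖ ≤ C * ‖a‖ * ‖b‖) (h0 : ∀ a b, a * b = 0 → β a b = 0)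
    (u : X →ᵇ ℝ) (hu : ∀ x, 0 ≤ u x) : ‖β u 1 - β 1 u‖ ≤ 6 * C := by
  obtain ⟨N, hN⟩ := exists_nat_ge ‖u‖
  have hsum : u = ∑ j ∈ Finset.range N, rr u j := by
    ext x
    rw [BoundedContinuousFunction.coe_sum, Finset.sum_apply]
    have hx : u x ≤ N := (le_abs_self _).trans ((u.norm_coe_le_norm x).trans hN)
    have : ∀ M : ℕ, ∑ j ∈ Finset.range M, rr u j x = min (u x) M := by
      intro M
      induction M with
      | zero => simp [hu x]
      | succ M ih =>
        rw [Finset.sum_range_succ, ih, rr_apply]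
        push_cast
        rcases le_total (u x) M with h | h
        · rw [min_eq_left h, min_eq_left (show u x ≤ (M : ℝ) + 1 by linarith), max_eq_left]
          · simp
          · exact (min_le_right _ _).trans (by linarith)
        · rw [min_eq_right h, max_eq_right]
          · rw [← min_add_add_left, min_comm]; congr 1; ring
          · exact le_min zero_le_one (by linarith)
    rw [this, min_eq_left hx]
  have e : β u 1 - β 1 u = (∑ j ∈ Finset.range N, β (rr u j) (1 - rr u j))
      - ∑ j ∈ Finset.range N, β.flip (rr u j) (1 - rr u j) := by
    conv_lhs => rw [hsum]
    rw [map_sum, map_sum, LinearMap.sum_apply, ← Finset.sum_sub_distrib, ← Finset.sum_sub_distrib]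
    refine Finset.sum_congr rfl fun j _ => ?_
    rw [LinearMap.flip_apply, map_sub, map_sub, LinearMap.sub_apply]
    abel
  rw [e]
  have b1 := half_bound β C hC0 hC h0 u N
  have b2 := half_bound β.flip C hC0 (fun a b => by
    rw [LinearMap.flip_apply]; refine (hC b a).trans (le_of_eq (by ring))) (fun a b h => by
    rw [LinearMap.flip_apply]; exact h0 b a (by rw [mul_comm]; exact h)) u N
  refine (norm_sub_le _ _).trans ?_
  linarith

theorem core_nonneg {X : Type*} [TopologicalSpace X] {F : Type*} [NormedAddCommGroup F]
    [NormedSpace ℝ F] (β : (X →ᵇ ℝ) →ₗ[ℝ] (X →ᵇ ℝ) →ₗ[ℝ] F) (C : ℝ) (hC0 : 0 ≤ C)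
    (hC : ∀ a b, ‖β a b‖ ≤ C * ‖a‖ * ‖b‖) (h0 : ∀ a b, a * b = 0 → β a b = 0)
    (u : X →ᵇ ℝ) (hu : ∀ x, 0 ≤ u x) : β u 1 = β 1 u := by
  rw [← sub_eq_zero, ← norm_eq_zero]
  by_contra hne
  have hpos : 0 < ‖β u 1 - β 1 u‖ := lt_of_le_of_ne (norm_nonneg _) (Ne.symm hne)
  obtain ⟨N, hN⟩ := exists_nat_gt (6 * C / ‖β u 1 - β 1 u‖)
  rw [div_lt_iff₀ hpos] at hN
  have := full_bound β C hC0 hC h0 ((N : ℝ) • u) (fun x => by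
    have := hu x
    simp only [BoundedContinuousFunction.coe_smul, smul_eq_mul]; positivity)
  rw [map_smul, map_smul, LinearMap.smul_apply, ← smul_sub, norm_smul, Real.norm_natCast] at this
  linarith

theorem core_real {X : Type*} [TopologicalSpace X] {F : Type*} [NormedAddCommGroup F]
    [NormedSpace ℝ F] (β : (X →ᵇ ℝ) →ₗ[ℝ] (X →ᵇ ℝ) →ₗ[ℝ] F) (C : ℝ) (hC0 : 0 ≤ C)
    (hC : ∀ a b, ‖β a b‖ ≤ C * ‖a‖ * ‖b‖) (h0 : ∀ a b, a * b = 0 → β a b = 0)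
    (u : X →ᵇ ℝ) : β u 1 = β 1 u := by
  have := core_nonneg β C hC0 hC h0 (u + ‖u‖ • 1) (fun x => by
    have := neg_le_of_abs_le (u.norm_coe_le_norm x)
    simp only [BoundedContinuousFunction.coe_add, Pi.add_apply,
      BoundedContinuousFunction.coe_smul, BoundedContinuousFunction.coe_one, Pi.one_apply,
      smul_eq_mul]
    linarith)
  simpa using this

theorem bal_real {X : Type*} [TopologicalSpace X] {F : Type*} [NormedAddCommGroup F]
    [NormedSpace ℂ F] {n : ℕ} (L : ContinuousMultilinearMap ℂ (fun _ : Fin n => C₀(X, ℂ)) F)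
    (horth : ∀ (f : Fin n → C₀(X, ℂ)) (i j : Fin n), i ≠ j → f i * f j = 0 → L f = 0)
    (f : Fin n → C₀(X, ℂ)) (i j : Fin n) (hij : i ≠ j) (a : X →ᵇ ℝ) :
    L (Function.update f i (bsm a (f i))) = L (Function.update f j (bsm a (f j))) := by
  classical
  have hadd : ∀ (a b : X →ᵇ ℝ) (f : C₀(X, ℂ)), bsm (a + b) f = bsm a f + bsm b f := by
    intro a b f; ext x; simp [bsm_apply, add_mul]
  have hsmul : ∀ (c : ℝ) (a : X →ᵇ ℝ) (f : C₀(X, ℂ)), bsm (c • a) f = (c : ℂ) • bsm a f := by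
    intro c a f; ext x; simp [bsm_apply, mul_assoc]
  have hone : ∀ (f : C₀(X, ℂ)), bsm 1 f = f := by
    intro f; ext x; simp [bsm_apply]
  let β : (X →ᵇ ℝ) →ₗ[ℝ] (X →ᵇ ℝ) →ₗ[ℝ] F := LinearMap.mk₂ ℝ
    (fun a b => L (Function.update (Function.update f i (bsm a (f i))) j (bsm b (f j))))
    (fun a a' b => by
      simp only [Function.update_comm hij, hadd]
      rw [L.map_update_add])
    (fun c a b => by
      simp only [Function.update_comm hij, hsmul]
      rw [L.map_update_smul, Complex.coe_smul])
    (fun a b b' => by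
      rw [hadd, L.map_update_add])
    (fun c a b => by
      rw [hsmul, L.map_update_smul, Complex.coe_smul])
  have hβ : ∀ a b, β a b
    = L (Function.update (Function.update f i (bsm a (f i))) j (bsm b (f j))) := fun a b => rfl
  have key := core_real β (‖L‖ * ∏ k, ‖f k‖) (by positivity) (fun a b => by
      rw [hβ]
      refine (L.le_opNorm_mul_prod_of_le (b := fun k =>
        ((if k = i then ‖a‖ else 1) * (if k = j then ‖b‖ else 1)) * ‖f k‖) fun k => ?_).trans ?_
      · by_cases hkj : k = j
        · subst hkj
          simp only [Function.update_self, if_true, hij.symm, if_false, one_mul]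
          exact bsm_norm_le _ _
        · rw [Function.update_of_ne hkj]
          by_cases hki : k = i
          · subst hki
            simp only [Function.update_self, if_true, hkj, if_false, mul_one]
            exact bsm_norm_le _ _
          · simp [hki, hkj]
      · rw [Finset.prod_mul_distrib, Finset.prod_mul_distrib]
        simp only [Finset.prod_ite_eq', Finset.mem_univ, if_true]
        exact le_of_eq (by ring)) (fun a b hab => by
      rw [hβ]
      refine horth _ i j hij ?_
      rw [Function.update_of_ne hij, Function.update_self, Function.update_self]
      ext x
      have := DFunLike.congr_fun hab x
      simp only [BoundedContinuousFunction.coe_mul, Pi.mul_apply,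
        BoundedContinuousFunction.coe_zero, Pi.zero_apply] at this
      rcases mul_eq_zero.1 this with h | h <;> simp [bsm_apply, h]) a
  rw [hβ, hβ, hone, hone, Function.update_eq_self] at key
  rw [← key, Function.update_comm hij, Function.update_eq_self]

theorem bal {X : Type*} [TopologicalSpace X] {F : Type*} [NormedAddCommGroup F]
    [NormedSpace ℂ F] {n : ℕ} (L : ContinuousMultilinearMap ℂ (fun _ : Fin n => C₀(X, ℂ)) F)
    (horth : ∀ (f : Fin n → C₀(X, ℂ)) (i j : Fin n), i ≠ j → f i * f j = 0 → L f = 0)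
    (f : Fin n → C₀(X, ℂ)) (i j : Fin n) (hij : i ≠ j) (h : C₀(X, ℂ)) :
    L (Function.update f i (h * f i)) = L (Function.update f j (h * f j)) := by
  let re : X →ᵇ ℝ := BoundedContinuousFunction.ofNormedAddCommGroup (fun x => (h x).re)
    (Complex.continuous_re.comp h.continuous) ‖h‖
    (fun x => (Complex.abs_re_le_norm _).trans (C0_norm_coe_le h x))
  let im : X →ᵇ ℝ := BoundedContinuousFunction.ofNormedAddCommGroup (fun x => (h x).im)
    (Complex.continuous_im.comp h.continuous) ‖h‖
    (fun x => (Complex.abs_im_le_norm _).trans (C0_norm_coe_le h x))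
  have hd : ∀ g : C₀(X, ℂ), h * g = bsm re g + Complex.I • bsm im g := by
    intro g
    ext x
    have h1 : re x = (h x).re := rfl
    have h2 : im x = (h x).im := rfl
    simp only [ZeroAtInftyContinuousMap.mul_apply, ZeroAtInftyContinuousMap.add_apply,
      ZeroAtInftyContinuousMap.smul_apply, bsm_apply, h1, h2, smul_eq_mul]
    conv_lhs => rw [← Complex.re_add_im (h x)]
    ring
  rw [hd, hd, L.map_update_add, L.map_update_add, L.map_update_smul, L.map_update_smul,
    bal_real L horth f i j hij re, bal_real L horth f i j hij im]

theorem move {X : Type*} [TopologicalSpace X] {F : Type*} [NormedAddCommGroup F]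
    [NormedSpace ℂ F] {n : ℕ} (L : ContinuousMultilinearMap ℂ (fun _ : Fin n => C₀(X, ℂ)) F)
    (horth : ∀ (f : Fin n → C₀(X, ℂ)) (i j : Fin n), i ≠ j → f i * f j = 0 → L f = 0)
    (v : Fin n → C₀(X, ℂ)) (w : C₀(X, ℂ)) (i₀ : Fin n) (s : Finset (Fin n)) (hs : i₀ ∉ s) :
    ∃ b : C₀(X, ℂ), (∀ x, b x = v i₀ x * w x * ∏ j ∈ s, v j x) ∧
      L (fun i => if i = i₀ then b else if i ∈ s then w else v i * w) = L (fun i => v i * w) := by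
  classical
  induction s using Finset.induction_on with
  | empty =>
    refine ⟨v i₀ * w, fun x => by simp, ?_⟩
    congr 1
    ext i : 1
    by_cases h : i = i₀ <;> simp [h]
  | insert j s hj ih =>
    rw [Finset.mem_insert, not_or] at hs
    obtain ⟨b, hb, hL⟩ := ih hs.2
    refine ⟨v j * b, fun x => ?_, ?_⟩
    · rw [Finset.prod_insert hj, ZeroAtInftyContinuousMap.mul_apply, hb]; ring
    · rw [← hL]
      have := bal L horth (fun i => if i = i₀ then b else if i ∈ insert j s then w else v i * w)
        i₀ j hs.1 (v j)
      convert this using 2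
      · ext i : 1
        by_cases h : i = i₀
        · subst h; simp
        · simp [h]
      · ext i : 1
        by_cases h : i = j
        · subst h; simp [hj, Ne.symm hs.1]
        · simp [h]

theorem factor {X : Type*} [TopologicalSpace X] (k : ℕ) (f w : C₀(X, ℂ))
    (h : ∀ x, ‖f x‖ ≤ ‖w x‖ ^ (k + 1)) :
    ∃ u : C₀(X, ℂ), (∀ x, f x = u x * w x ^ k) ∧ ∀ x, ‖u x‖ ≤ ‖w x‖ := by
  have hz : ∀ x, w x = 0 → f x = 0 := fun x hx => by
    have := h x
    rw [hx] at this
    simpa using this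
  have hle : ∀ x, ‖f x / w x ^ k‖ ≤ ‖w x‖ := by
    intro x
    by_cases hx : w x = 0
    · rw [hz x hx]; simp
    · rw [norm_div, norm_pow, div_le_iff₀ (pow_pos (norm_pos_iff.2 hx) _), ← pow_succ']
      exact h x
  refine ⟨⟨⟨fun x => f x / w x ^ k, ?_⟩, ?_⟩, fun x => ?_, hle⟩
  · rw [continuous_iff_continuousAt]
    intro x
    by_cases hx : w x = 0
    · have h1 : f x / w x ^ k = 0 := by rw [hz x hx]; simp
      have h2 : Filter.Tendsto (fun y => ‖w y‖) (nhds x) (nhds 0) := by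
        have : Filter.Tendsto (fun y => ‖w y‖) (nhds x) (nhds ‖w x‖) :=
          w.continuous.norm.tendsto x
        rwa [hx, norm_zero] at this
      unfold ContinuousAt
      beta_reduce
      rw [h1]
      exact squeeze_zero_norm hle h2
    · exact ContinuousAt.div f.continuous.continuousAt (w.continuous.continuousAt.pow k)
        (pow_ne_zero _ hx)
  · have := (zero_at_infty w).norm
    rw [norm_zero] at this
    exact squeeze_zero_norm hle this
  · change f x = f x / w x ^ k * w x ^ k
    by_cases hx : w x = 0
    · rw [hz x hx]; simp
    · rw [div_mul_cancel₀ _ (pow_ne_zero _ hx)]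

theorem root {X : Type*} [TopologicalSpace X] (k : ℕ) (hk : k ≠ 0) (q : X → ℝ)
    (hc : Continuous q) (h0 : ∀ x, 0 ≤ q x)
    (ht : Filter.Tendsto q (Filter.cocompact X) (nhds 0)) :
    ∃ w : C₀(X, ℂ), ∀ x, ‖w x‖ ^ k = q x := by
  have hk' : (0 : ℝ) < (k : ℝ)⁻¹ := by positivity
  refine ⟨⟨⟨fun x => ((q x ^ ((k : ℝ)⁻¹) : ℝ) : ℂ), ?_⟩, ?_⟩, fun x => ?_⟩
  · exact Complex.continuous_ofReal.comp (hc.rpow_const fun x => Or.inr hk'.le)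
  · have h1 := ht.rpow_const (p := (k : ℝ)⁻¹) (Or.inr hk'.le)
    rw [Real.zero_rpow hk'.ne'] at h1
    have := (Complex.continuous_ofReal.tendsto 0).comp h1
    rw [Complex.ofReal_zero] at this
    exact this
  · change ‖((q x ^ ((k : ℝ)⁻¹) : ℝ) : ℂ)‖ ^ k = q x
    rw [Complex.norm_real, Real.norm_of_nonneg (Real.rpow_nonneg (h0 x) _),
      Real.rpow_inv_natCast_pow (h0 x) hk]

theorem tendsto_norm_C0 {X : Type*} [TopologicalSpace X] (f : C₀(X, ℂ)) :
    Filter.Tendsto (fun x => ‖f x‖) (Filter.cocompact X) (nhds 0) := by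
  simpa using (zero_at_infty f).norm

/-- `L f` depends only on the pointwise product. -/
theorem prod_only {X : Type*} [TopologicalSpace X] {F : Type*} [NormedAddCommGroup F]
    [NormedSpace ℂ F] {n : ℕ} (L : ContinuousMultilinearMap ℂ (fun _ : Fin n => C₀(X, ℂ)) F)
    (horth : ∀ (f : Fin n → C₀(X, ℂ)) (i j : Fin n), i ≠ j → f i * f j = 0 → L f = 0)
    (i₀ : Fin n) (f g : Fin n → C₀(X, ℂ)) (hfg : ∀ x, ∏ i, f i x = ∏ i, g i x) : L f = L g := by
  classical
  obtain ⟨w, hw⟩ := root 2 (by norm_num) (fun x => (∑ i, ‖f i x‖) + ∑ i, ‖g i x‖)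
    (by
      have h1 := fun i => (f i).continuous
      have h2 := fun i => (g i).continuous
      fun_prop)
    (fun x => by positivity)
    (by
      have h1 := tendsto_finsetSum Finset.univ fun i _ => tendsto_norm_C0 (f i)
      have h2 := tendsto_finsetSum Finset.univ fun i _ => tendsto_norm_C0 (g i)
      simpa using h1.add h2)
  have hf : ∀ i, ∃ u : C₀(X, ℂ), (∀ x, f i x = u x * w x ^ 1) ∧ ∀ x, ‖u x‖ ≤ ‖w x‖ := fun i =>
    factor 1 (f i) w fun x => by
      rw [hw]
      have h1 := Finset.single_le_sum (f := fun i => ‖f i x‖) (fun i _ => norm_nonneg _)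
        (Finset.mem_univ i)
      have h2 : 0 ≤ ∑ i, ‖g i x‖ := by positivity
      linarith
  have hg : ∀ i, ∃ u : C₀(X, ℂ), (∀ x, g i x = u x * w x ^ 1) ∧ ∀ x, ‖u x‖ ≤ ‖w x‖ := fun i =>
    factor 1 (g i) w fun x => by
      rw [hw]
      have h1 := Finset.single_le_sum (f := fun i => ‖g i x‖) (fun i _ => norm_nonneg _)
        (Finset.mem_univ i)
      have h2 : 0 ≤ ∑ i, ‖f i x‖ := by positivity
      linarith
  choose v hv hvw using hf
  choose v' hv' hvw' using hg
  have ef : f = fun i => v i * w := by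
    ext i x; simp [hv]
  have eg : g = fun i => v' i * w := by
    ext i x; simp [hv']
  obtain ⟨b, hb, hL⟩ := move L horth v w i₀ (Finset.univ.erase i₀) (by simp)
  obtain ⟨b', hb', hL'⟩ := move L horth v' w i₀ (Finset.univ.erase i₀) (by simp)
  have hbb : b = b' := by
    ext x
    rw [hb, hb', mul_right_comm, mul_right_comm (v' i₀ x),
      Finset.mul_prod_erase Finset.univ (fun i => v i x) (Finset.mem_univ _),
      Finset.mul_prod_erase Finset.univ (fun i => v' i x) (Finset.mem_univ _)]
    by_cases hx : w x = 0
    · rw [hx]; simp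
    · congr 1
      have := hfg x
      simp only [hv, hv', Finset.prod_mul_distrib] at this
      exact mul_right_cancel₀ (by simp [hx]) this
  rw [ef, eg, ← hL, ← hL', hbb]
  congr 1
  ext i : 1
  by_cases h : i = i₀ <;> simp [h]

/-- linearization of bounded orthogonally additive `n`-homogeneous
polynomials on `C₀(X)`: `P(f) = T(fⁿ)` for a bounded linear `T`. -/
theorem stmt_4 {X : Type*} [TopologicalSpace X] [LocallyCompactSpace X] [T2Space X]
    {F : Type*} [NormedAddCommGroup F] [NormedSpace ℂ F]
    (n : ℕ) (hn : 0 < n) (P : C₀(X, ℂ) → F) (hP : IsHomogPolynomial n P)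
    (horth : ∀ f g : C₀(X, ℂ), f * g = 0 → P (f + g) = P f + P g) :
    ∃ T : C₀(X, ℂ) →L[ℂ] F, ∀ f fn : C₀(X, ℂ),
      (∀ x : X, fn x = (f x) ^ n) → P f = T fn := by
  obtain ⟨L, hs, hPL⟩ := hP
  have hL0 : ∀ (f : Fin n → C₀(X, ℂ)) (i j : Fin n), i ≠ j → f i * f j = 0 → L f = 0 :=
    fun f i j => orthosymm L hs (fun f g h => by rw [← hPL, ← hPL, ← hPL]; exact horth f g h) f i j
  obtain ⟨m, rfl⟩ : ∃ m, n = m + 1 := ⟨n - 1, by omega⟩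
  have hpo := prod_only L hL0 0
  have hw : ∀ f : C₀(X, ℂ), ∃ w : C₀(X, ℂ), ∀ x, ‖w x‖ ^ (m + 1) = ‖f x‖ := fun f =>
    root (m + 1) (by omega) _ f.continuous.norm (fun x => norm_nonneg _) (tendsto_norm_C0 f)
  choose w hw using hw
  have hu : ∀ f : C₀(X, ℂ), ∃ u : C₀(X, ℂ), (∀ x, f x = u x * w f x ^ m) ∧
      ∀ x, ‖u x‖ ≤ ‖w f x‖ := fun f => factor m f (w f) fun x => (hw f x).ge
  choose u hu huw using hu
  have hprod : ∀ (a b : C₀(X, ℂ)) (x : X),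
      ∏ i, (Function.update (fun _ : Fin (m + 1) => b) 0 a i) x = a x * b x ^ m := by
    intro a b x
    rw [Fin.prod_univ_succ]
    simp
  let T0 : C₀(X, ℂ) → F := fun f => L (Function.update (fun _ => w f) 0 (u f))
  have hT0 : ∀ (f : C₀(X, ℂ)) (g : Fin (m + 1) → C₀(X, ℂ)), (∀ x, ∏ i, g i x = f x) →
      T0 f = L g := fun f g h => hpo _ _ fun x => by rw [hprod, h, ← hu]
  let Tl : C₀(X, ℂ) →ₗ[ℂ] F :=
    { toFun := T0
      map_add' := fun f g => by
        obtain ⟨z, hz⟩ := root (m + 1) (by omega) (fun x => ‖f x‖ + ‖g x‖)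
          (f.continuous.norm.add g.continuous.norm) (fun x => by positivity)
          (by simpa using (tendsto_norm_C0 f).add (tendsto_norm_C0 g))
        obtain ⟨a, ha, -⟩ := factor m f z fun x => by
          rw [hz]; have := norm_nonneg (g x); linarith
        obtain ⟨b, hb, -⟩ := factor m g z fun x => by
          rw [hz]; have := norm_nonneg (f x); linarith
        rw [hT0 f (Function.update (fun _ => z) 0 a) fun x => by rw [hprod, ha],
          hT0 g (Function.update (fun _ => z) 0 b) fun x => by rw [hprod, hb],
          hT0 (f + g) (Function.update (fun _ => z) 0 (a + b)) fun x => by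
            rw [hprod, ZeroAtInftyContinuousMap.add_apply, ZeroAtInftyContinuousMap.add_apply,
              ha, hb]; ring,
          L.map_update_add]
      map_smul' := fun c f => by
        rw [hT0 (c • f) (Function.update (fun _ => w f) 0 (c • u f)) fun x => by
            rw [hprod, ZeroAtInftyContinuousMap.smul_apply, ZeroAtInftyContinuousMap.smul_apply,
              hu f x, smul_eq_mul, smul_eq_mul]; ring,
          L.map_update_smul]
        rfl }
  refine ⟨Tl.mkContinuous ‖L‖ fun f => ?_, fun f fn hfn => ?_⟩
  · change ‖L (Function.update (fun _ => w f) 0 (u f))‖ ≤ ‖L‖ * ‖f‖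
    have hr : (‖f‖ ^ (((m + 1 : ℕ) : ℝ)⁻¹)) ^ (m + 1) = ‖f‖ :=
      Real.rpow_inv_natCast_pow (norm_nonneg f) (by omega)
    have hr0 : 0 ≤ ‖f‖ ^ (((m + 1 : ℕ) : ℝ)⁻¹) := by positivity
    have hwn : ∀ x, ‖w f x‖ ≤ ‖f‖ ^ (((m + 1 : ℕ) : ℝ)⁻¹) := fun x => by
      rw [← pow_le_pow_iff_left₀ (norm_nonneg _) hr0 (by omega : m + 1 ≠ 0), hr, hw]
      exact C0_norm_coe_le f x
    have := L.le_opNorm_mul_pow_of_le (m := Function.update (fun _ => w f) 0 (u f))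
      (b := ‖f‖ ^ (((m + 1 : ℕ) : ℝ)⁻¹)) ((pi_norm_le_iff_of_nonneg hr0).2 fun i => by
        by_cases hi : i = 0
        · subst hi
          rw [Function.update_self]
          exact C0_norm_le hr0 fun x => (huw f x).trans (hwn x)
        · rw [Function.update_of_ne hi]
          exact C0_norm_le hr0 hwn)
    rwa [hr] at this
  · rw [hPL]
    exact (hT0 fn (fun _ => f) fun x => by simp [hfn]).symm
end

section
/- Let A be a C*-algebra, F a complex Banach space, and P : A → F a bounded n-homogeneous polynomial. Then the following are equivalent: (1) there exists a bounded linear operator T : A → F with P(a) = T(aⁿ) for all a ∈ A; (2) P is orthogonally additive on A (ab = ba = 0 implies P(a+b) = P(a)+P(b)); (3) P is orthogonally additive on the self-adjoint part A_sa (ab = 0 implies P(a+b) = P(a)+P(b) for self-adjoint a, b). -/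
/-- `nupow a n` is the `n`-th power `aⁿ` of `a` (for `n ≥ 1`) in a possibly non-unital
ring: `nupow a 1 = a`, `nupow a (k+1) = a * nupow a k`. -/
def nupow {A : Type*} [NonUnitalRing A] (a : A) : ℕ → A
  | 0 => a
  | 1 => a
  | (k + 2) => a * nupow a (k + 1)

open Filter Topology
open scoped ContinuousMapZero

section sym
variable {V F : Type*} [NormedAddCommGroup V] [NormedSpace ℝ V]
  [NormedAddCommGroup F] [NormedSpace ℝ F]

/-- symmetry of a multilinear map -/
def SymM {n : ℕ} (M : ContinuousMultilinearMap ℝ (fun _ : Fin n => V) F) : Prop :=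
  ∀ (v : Fin n → V) (σ : Equiv.Perm (Fin n)), (M fun i => v (σ i)) = M v

theorem SymM.curryLeft {n : ℕ} {M : ContinuousMultilinearMap ℝ (fun _ : Fin (n+1) => V) F}
    (hM : SymM M) (u : V) : SymM (V := V) (M.curryLeft u) := by
  intro v σ
  rw [ContinuousMultilinearMap.curryLeft_apply, ContinuousMultilinearMap.curryLeft_apply]
  rw [← hM (Fin.cons u v) (Equiv.Perm.decomposeFin.symm (0, σ))]
  congr 1
  ext i
  refine Fin.cases ?_ (fun j => ?_) i
  · simp
  · simp [Equiv.Perm.decomposeFin_symm_apply_succ]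

theorem SymM.update {n : ℕ} {M : ContinuousMultilinearMap ℝ (fun _ : Fin (n+1) => V) F}
    (hM : SymM M) (u f : V) (i : Fin (n+1)) :
    M (Function.update (fun _ => f) i u) = M (Fin.cons u (fun _ => f)) := by
  rw [← hM (Fin.cons u (fun _ => f)) (Equiv.swap 0 i)]
  congr 1
  ext j
  by_cases h : j = i
  · subst h; simp
  · rw [Function.update_of_ne h]
    have : Equiv.swap 0 i j ≠ 0 := by
      intro h'
      apply h
      have := congrArg (Equiv.swap 0 i) h'
      simpa using this
    obtain ⟨k, hk⟩ := Fin.exists_succ_eq.2 this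
    rw [← hk]; simp

theorem SymM.deriv {n : ℕ} {M : ContinuousMultilinearMap ℝ (fun _ : Fin (n+1) => V) F}
    (hM : SymM M) (u f : V) :
    HasDerivAt (fun s : ℝ => M (fun _ => f + s • u))
      ((n+1 : ℝ) • M (Fin.cons u (fun _ => f))) 0 := by
  have h1 : HasDerivAt (fun s : ℝ => (fun _ : Fin (n+1) => f + s • u)) (fun _ => u) 0 := by
    rw [hasDerivAt_pi]
    intro i
    simpa using ((hasDerivAt_id (0:ℝ)).smul_const u).const_add f
  have h2 := (M.hasFDerivAt (fun _ => f + (0:ℝ) • u)).comp_hasDerivAt (0:ℝ) h1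
  refine h2.congr_deriv ?_
  rw [ContinuousMultilinearMap.linearDeriv_apply]
  simp only [zero_smul, add_zero, hM.update]
  simp [← Nat.cast_smul_eq_nsmul ℝ]

theorem SymM.swap {n : ℕ} {M : ContinuousMultilinearMap ℝ (fun _ : Fin (n+2) => V) F}
    (hM : SymM M) (u v : V) (w : Fin n → V) :
    M (Fin.cons u (Fin.cons v w)) = M (Fin.cons v (Fin.cons u w)) := by
  rw [← hM (Fin.cons v (Fin.cons u w)) (Equiv.swap 0 1)]
  congr 1
  ext j
  refine Fin.cases ?_ (fun j => Fin.cases ?_ (fun j => ?_) j) j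
  · simp
  · have : (Fin.succ 0 : Fin (n+2)) = 1 := rfl
    rw [this]; simp
  · rw [Equiv.swap_apply_of_ne_of_ne]
    · rfl
    · simp
    · rw [← Fin.succ_zero_eq_one]; simp [Fin.ext_iff]
end sym

section oa
variable {X F : Type*} [TopologicalSpace X] [CompactSpace X] [Zero X]
  [NormedAddCommGroup F] [NormedSpace ℝ F]

/-- orthogonal additivity -/
def OA {n : ℕ} (M : ContinuousMultilinearMap ℝ (fun _ : Fin n => C(X, ℝ)₀) F) : Prop :=
  ∀ f h : C(X, ℝ)₀, f * h = 0 → M (fun _ => f + h) = M (fun _ => f) + M (fun _ => h)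

theorem OA.curry_aux {n : ℕ} {M : ContinuousMultilinearMap ℝ (fun _ : Fin (n+2) => C(X, ℝ)₀) F}
    (hM : SymM M) (ho : OA M) (u f h : C(X, ℝ)₀) (hfh : f * h = 0) (huh : u * h = 0) :
    M (Fin.cons u (fun _ => f + h)) = M (Fin.cons u (fun _ => f)) ∧
     M (Fin.cons u (fun _ => h)) = 0 := by
  have hne : ((n + 1 : ℕ) + 1 : ℝ) ≠ 0 := by positivity
  constructor
  · have h1 := hM.deriv u (f + h)
    have h2 := (hM.deriv u f).add_const (M fun _ => h)
    have h3 : (fun s : ℝ => M (fun _ => f + h + s • u)) =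
        (fun s : ℝ => M (fun _ => f + s • u) + M fun _ => h) := by
      ext s
      rw [← ho]
      · congr 1; ext i; simp; ring
      · rw [add_mul, hfh, smul_mul_assoc, huh, zero_add]; ext x; exact mul_zero s
    rw [h3] at h1
    have := h1.unique h2
    exact smul_right_injective _ hne this
  · have h1 := hM.deriv u h
    have h3 : (fun s : ℝ => M (fun _ => h + s • u)) =
        (fun s : ℝ => M (fun _ => h) + s ^ (n+2) • M fun _ => u) := by
      ext s
      rw [ho]
      · congr 1
        rw [show (fun _ : Fin (n+2) => s • u) = fun i => (fun _ => s) i • (fun _ => u) i from rfl,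
          M.map_smul_univ]
        simp
      · rw [mul_smul_comm, mul_comm, huh]; ext x; exact mul_zero s
    rw [h3] at h1
    have h2 : HasDerivAt (fun s : ℝ => M (fun _ => h) + s ^ (n+2) • M fun _ => u) 0 0 := by
      simpa using ((hasDerivAt_pow (n+2) (0:ℝ)).smul_const (M fun _ => u)).const_add (M fun _ => h)
    have := h1.unique h2
    rcases smul_eq_zero.1 this with h | h
    · exact absurd h hne
    · exact h

theorem OA.curry_aux2 {n : ℕ} {M : ContinuousMultilinearMap ℝ (fun _ : Fin (n+2) => C(X, ℝ)₀) F}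
    (hM : SymM M) (ho : OA M) (u f h b : C(X, ℝ)₀) (hfh : f * h = 0) (hb : b * f = 0)
    (hb' : h * b = h) :
    M (Fin.cons u (fun _ => f + h)) = M (Fin.cons u (fun _ => f)) +
     M (Fin.cons u (fun _ => h)) := by
  have e : u = (u - b * u) + b * u := by abel
  have key : ∀ w : Fin (n+1) → C(X, ℝ)₀, M (Fin.cons u w) =
      M (Fin.cons (u - b * u) w) + M (Fin.cons (b * u) w) := by
    intro w
    conv_lhs => rw [e]
    exact M.cons_add w _ _
  have h1 := OA.curry_aux hM ho (u - b * u) f h hfh (by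
    rw [sub_mul, mul_right_comm, mul_comm b h, hb', mul_comm h, sub_self])
  have h2 := OA.curry_aux hM ho (b * u) h f (by rw [mul_comm, hfh]) (by
    rw [mul_right_comm, hb, zero_mul])
  rw [key, key, key, h1.1, h1.2, h2.2, add_comm f h, h2.1]
  abel

theorem trunc (h : C(X, ℝ)₀) (k : ℕ) : ∃ h' b : C(X, ℝ)₀, ‖h' - h‖ ≤ 1 / (k + 1 : ℝ) ∧
    h' * b = h' ∧ ∀ f : C(X, ℝ)₀, f * h = 0 → f * h' = 0 ∧ b * f = 0 := by
  have hc : Continuous h := map_continuous h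
  set ε : ℝ := 1 / (k + 1 : ℝ) with hε
  have hε0 : 0 < ε := by positivity
  refine ⟨⟨⟨fun x => h x - max (-ε) (min (h x) ε), by fun_prop⟩, by simp [hε0.le]⟩,
    ⟨⟨fun x => min (|h x| / ε) 1, by fun_prop⟩, by simp⟩, ?_, ?_, ?_⟩
  · rw [ContinuousMapZero.norm_def, ContinuousMap.norm_le _ hε0.le]
    intro x
    simp only [Real.norm_eq_abs]
    change |h x - max (-ε) (min (h x) ε) - h x| ≤ ε
    rw [abs_le]
    constructor <;> rcases max_cases (-ε) (min (h x) ε) with h1 | h1 <;>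
      rcases min_cases (h x) ε with h2 | h2 <;> linarith
  · ext x
    change (h x - max (-ε) (min (h x) ε)) * min (|h x| / ε) 1 = h x - max (-ε) (min (h x) ε)
    by_cases hx : |h x| ≤ ε
    · rw [abs_le] at hx
      rw [min_eq_left hx.2, max_eq_right hx.1]; simp
    · rw [min_eq_right (a := |h x| / ε), mul_one]
      rw [one_le_div hε0]; linarith
  · intro f hf
    have hf' : ∀ x, f x = 0 ∨ h x = 0 := fun x => mul_eq_zero.1 (DFunLike.congr_fun hf x)
    constructor
    · ext x
      change f x * (h x - max (-ε) (min (h x) ε)) = 0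
      rcases hf' x with h1 | h1 <;> simp [h1, hε0.le]
    · ext x
      change min (|h x| / ε) 1 * f x = 0
      rcases hf' x with h1 | h1 <;> simp [h1]

theorem OA.curryLeft {n : ℕ} {M : ContinuousMultilinearMap ℝ (fun _ : Fin (n+2) => C(X, ℝ)₀) F}
    (hM : SymM M) (ho : OA M) (u : C(X, ℝ)₀) : OA (X := X) (M.curryLeft u) := by
  intro f h hfh
  choose h' b h1 h2 h3 using trunc h
  have hl : Tendsto h' atTop (𝓝 h) := by
    rw [tendsto_iff_norm_sub_tendsto_zero]
    exact squeeze_zero (fun _ => norm_nonneg _) h1 tendsto_one_div_add_atTop_nhds_zero_nat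
  have hk : ∀ k, M.curryLeft u (fun _ => f + h' k) =
      M.curryLeft u (fun _ => f) + M.curryLeft u (fun _ => h' k) := fun k =>
    OA.curry_aux2 hM ho u f (h' k) (b k) (h3 k f hfh).1 (h3 k f hfh).2 (h2 k)
  have c1 : Continuous fun z : C(X, ℝ)₀ => M.curryLeft u (fun _ => f + z) :=
    (M.curryLeft u).cont.comp (by fun_prop)
  have c2 : Continuous fun z : C(X, ℝ)₀ => M.curryLeft u (fun _ => f) + M.curryLeft u (fun _ => z) :=
    continuous_const.add ((M.curryLeft u).cont.comp (by fun_prop))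
  have t1 := (c1.tendsto h).comp hl
  have t2 := (c2.tendsto h).comp hl
  refine tendsto_nhds_unique t1 (t2.congr fun k => (hk k).symm)

theorem OA.pair {n : ℕ} : ∀ {M : ContinuousMultilinearMap ℝ (fun _ : Fin (n+2) => C(X, ℝ)₀) F}
    (_ : SymM M) (_ : OA M) (u v g : C(X, ℝ)₀) (_ : u * v = 0),
    M (Fin.cons u (Fin.cons v (fun _ => g))) = 0 := by
  induction n with
  | zero =>
    intro M hM ho u v g huv
    have h := (OA.curry_aux hM ho u 0 v (by simp) huv).2
    rw [← h]
    congr 1; ext i; fin_cases i <;> rfl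
  | succ n ih =>
    intro M hM ho u v g huv
    have h := ih (hM.curryLeft g) (OA.curryLeft hM ho g) u v g huv
    rw [ContinuousMultilinearMap.curryLeft_apply, hM.swap] at h
    have e : (fun _ => g : Fin (n+1) → C(X, ℝ)₀) = Fin.cons g (fun _ => g) := by
      ext i; refine Fin.cases ?_ (fun j => ?_) i <;> simp
    rw [e, ← h]
    have h4 := (hM.curryLeft u).swap v g (fun _ => g)
    exact h4
end oa

section bil
variable {X F : Type*} [TopologicalSpace X] [CompactSpace X] [Zero X]
  [NormedAddCommGroup F] [NormedSpace ℝ F]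

theorem nupow_apply (f : C(X, ℝ)₀) (k : ℕ) (x : X) : nupow f (k+1) x = f x ^ (k+1) := by
  induction k with
  | zero => simp [nupow]
  | succ k ih =>
    change f x * nupow f (k+1) x = _
    rw [ih]; ring

theorem cz_norm_le (f : C(X, ℝ)₀) {c : ℝ} (hc : 0 ≤ c) (h : ∀ x, |f x| ≤ c) : ‖f‖ ≤ c := by
  rw [ContinuousMapZero.norm_def, ContinuousMap.norm_le _ hc]
  exact h

theorem cz_le_norm (f : C(X, ℝ)₀) (x : X) : |f x| ≤ ‖f‖ := by
  rw [ContinuousMapZero.norm_def]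
  exact ContinuousMap.norm_coe_le_norm (f : C(X, ℝ)) x

theorem bil_aux (φ : C(X, ℝ)₀ →ₗ[ℝ] C(X, ℝ)₀ →ₗ[ℝ] F) (C : ℝ) (hC : 0 ≤ C)
    (hb : ∀ u v, ‖φ u v‖ ≤ C * ‖u‖ * ‖v‖) (hs : ∀ u v, φ u v = φ v u)
    (ho : ∀ u v, u * v = 0 → φ u v = 0) (f g : C(X, ℝ)₀) (hf : ∀ x, 0 ≤ f x)
    (hfg : f * g = f) (k : ℕ) (R : ℝ) (hR : 0 < R) (hfR : ∀ x, f x ≤ R) (N : ℕ) :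
    ‖φ (nupow f (k+1)) f - φ (nupow f (k+1) * f) g‖ ≤
      (C * (1 + ‖g‖) * ((k + 1) * R ^ k) * R ^ 2) * (1 / ((N : ℝ) + 1)) := by
  set δ : ℝ := R / (N + 1) with hδ
  have hδ0 : 0 < δ := by positivity
  have hNδ : ((N + 1 : ℕ) : ℝ) * δ = R := by push_cast; rw [hδ]; field_simp
  have hfc : Continuous f := map_continuous f
  let m : ℕ → C(X, ℝ)₀ := fun j => ⟨⟨fun x => min (f x) (j * δ), by fun_prop⟩, by
    simp; positivity⟩
  have hm : ∀ j x, m j x = min (f x) (j * δ) := fun _ _ => rfl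
  have hm0 : m 0 = 0 := by ext x; simp [hm, hf x]
  have hmN : m (N+1) = f := by ext x; rw [hm, hNδ, min_eq_left (hfR x)]
  let p : ℕ → C(X, ℝ)₀ := fun j => m (j+1) - m j
  let q : ℕ → C(X, ℝ)₀ := fun j => nupow (m (j+1)) (k+1) - nupow (m j) (k+1)
  have hp : ∀ j x, p j x = m (j+1) x - m j x := fun _ _ => rfl
  have hq : ∀ j x, q j x = m (j+1) x ^ (k+1) - m j x ^ (k+1) := fun j x => by
    rw [← nupow_apply, ← nupow_apply]; rfl
  have hsp : ∑ j ∈ Finset.range (N+1), p j = f := by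
    rw [Finset.sum_range_sub, hm0, hmN, sub_zero]
  have hsq : ∑ j ∈ Finset.range (N+1), q j = nupow f (k+1) := by
    rw [Finset.sum_range_sub (fun j => nupow (m j) (k+1)), hm0, hmN]
    have : nupow (0 : C(X, ℝ)₀) (k+1) = 0 := by
      ext x; rw [nupow_apply]; simp
    rw [this, sub_zero]
  have hsmall : ∀ (j : ℕ) x, f x ≤ j * δ → m j x = f x ∧ m (j+1) x = f x := by
    intro j x h
    rw [hm, hm]; push_cast
    exact ⟨min_eq_left h, min_eq_left (by nlinarith)⟩
  have hbig : ∀ (j : ℕ) x, (j : ℝ) * δ ≤ f x → m j x = j * δ := by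
    intro j x h
    rw [hm]; exact min_eq_right h
  have hg1 : ∀ x, 0 < f x → g x = 1 := by
    intro x hx
    have := DFunLike.congr_fun hfg x
    change f x * g x = f x at this
    field_simp at this
    exact this
  -- off-diagonal terms
  have key1 : ∀ (i j : ℕ), i < j → ∀ w : C(X, ℝ)₀, (∀ x, f x ≤ j * δ → w x = 0) →
      (p i - δ • g) * w = 0 ∧ p i * w = δ • w ∧
      (q i - (((i + 1 : ℝ) * δ) ^ (k+1) - ((i : ℝ) * δ)^(k+1)) • g) * w = 0 ∧
      q i * w = (((i + 1 : ℝ) * δ) ^ (k+1) - ((i : ℝ) * δ)^(k+1)) • w := by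
    intro i j hij w hw
    have hij' : ((i + 1 : ℕ) : ℝ) ≤ j := by exact_mod_cast hij
    have aux : ∀ x, w x = 0 ∨ (g x = 1 ∧ m i x = i * δ ∧ m (i+1) x = (i + 1) * δ) := by
      intro x
      by_cases hx : f x ≤ j * δ
      · exact Or.inl (hw x hx)
      · right
        push Not at hx
        have h1 : ((i + 1 : ℕ) : ℝ) * δ ≤ f x := by nlinarith
        have h2 : (i : ℝ) * δ ≤ f x := by push_cast at h1; nlinarith
        refine ⟨hg1 x (lt_of_le_of_lt (by positivity) hx), hbig i x h2, ?_⟩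
        have := hbig (i+1) x h1
        rw [this]; push_cast; ring
    refine ⟨?_, ?_, ?_, ?_⟩
    · ext x
      change (p i x - δ * g x) * w x = 0
      rw [hp]
      rcases aux x with h | ⟨h1, h2, h3⟩
      · rw [h, mul_zero]
      · rw [h1, h2, h3]; ring
    · ext x
      change p i x * w x = δ * w x
      rw [hp]
      rcases aux x with h | ⟨h1, h2, h3⟩
      · rw [h, mul_zero, mul_zero]
      · rw [h2, h3]; ring
    · ext x
      change (q i x - _ * g x) * w x = 0
      rw [hq]
      rcases aux x with h | ⟨h1, h2, h3⟩
      · rw [h, mul_zero]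
      · rw [h1, h2, h3]; ring
    · ext x
      change q i x * w x = _ * w x
      rw [hq]
      rcases aux x with h | ⟨h1, h2, h3⟩
      · rw [h, mul_zero, mul_zero]
      · rw [h2, h3]
  have hp0 : ∀ (j : ℕ) x, f x ≤ j * δ → p j x = 0 := by
    intro j x h
    rw [hp, (hsmall j x h).1, (hsmall j x h).2, sub_self]
  have hq0 : ∀ (j : ℕ) x, f x ≤ j * δ → q j x = 0 := by
    intro j x h
    rw [hq, (hsmall j x h).1, (hsmall j x h).2, sub_self]
  have off : ∀ i j, i ≠ j → φ (q i) (p j) - φ (q i * p j) g = 0 := by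
    intro i j hij
    rcases lt_or_gt_of_ne hij with h | h
    · obtain ⟨-, -, h3, h4⟩ := key1 i j h (p j) (hp0 j)
      have := ho _ _ h3
      rw [LinearMap.map_sub₂, LinearMap.map_smul₂, sub_eq_zero] at this
      rw [this, h4, map_smul, LinearMap.smul_apply, hs g, sub_self]
    · obtain ⟨h1, h2, -, -⟩ := key1 j i h (q i) (hq0 i)
      have := ho _ _ h1
      rw [LinearMap.map_sub₂, LinearMap.map_smul₂, sub_eq_zero] at this
      rw [hs, this, mul_comm, h2, map_smul, LinearMap.smul_apply, hs g, sub_self]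
  have hpn : ∀ j, ‖p j‖ ≤ δ := by
    intro j
    refine cz_norm_le _ hδ0.le fun x => ?_
    rw [hp, hm, hm]
    refine (abs_min_sub_min_le_max _ _ _ _).trans ?_
    push_cast
    rw [sub_self, abs_zero, show ((j : ℝ) + 1) * δ - j * δ = δ by ring, abs_of_pos hδ0]
    exact max_le hδ0.le le_rfl
  have hmR : ∀ j x, |m j x| ≤ R := by
    intro j x
    rw [hm, abs_of_nonneg (le_min (hf x) (by positivity))]
    exact (min_le_left _ _).trans (hfR x)
  have hqn : ∀ j, ‖q j‖ ≤ δ * ((k + 1) * R ^ k) := by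
    intro j
    refine cz_norm_le _ (by positivity) fun x => ?_
    rw [hq]
    refine (abs_pow_sub_pow_le _ _ _).trans ?_
    have h1 : |m (j+1) x - m j x| ≤ δ := (cz_le_norm (p j) x).trans (hpn j)
    have h2 : (max |m (j+1) x| |m j x|) ^ k ≤ R ^ k :=
      pow_le_pow_left₀ (le_max_of_le_left (abs_nonneg _)) (max_le (hmR _ _) (hmR _ _)) k
    push_cast
    rw [mul_assoc]
    gcongr
  have hexp : φ (nupow f (k+1)) f - φ (nupow f (k+1) * f) g =
      ∑ i ∈ Finset.range (N+1), ∑ j ∈ Finset.range (N+1), (φ (q i) (p j) - φ (q i * p j) g) := by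
    conv_lhs => rw [← hsq]
    have e1 : φ (∑ j ∈ Finset.range (N+1), q j) f =
        ∑ i ∈ Finset.range (N+1), ∑ j ∈ Finset.range (N+1), φ (q i) (p j) := by
      conv_lhs => rw [← hsp]
      simp only [map_sum, LinearMap.sum_apply]
      exact Finset.sum_comm
    have e2 : φ ((∑ j ∈ Finset.range (N+1), q j) * f) g =
        ∑ i ∈ Finset.range (N+1), ∑ j ∈ Finset.range (N+1), φ (q i * p j) g := by
      conv_lhs => rw [← hsp]
      rw [Finset.sum_mul_sum]
      simp only [map_sum, LinearMap.sum_apply]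
    rw [e1, e2]
    simp only [Finset.sum_sub_distrib]
  have hdiag : ∀ i ∈ Finset.range (N+1),
      ∑ j ∈ Finset.range (N+1), (φ (q i) (p j) - φ (q i * p j) g) =
        φ (q i) (p i) - φ (q i * p i) g := by
    intro i hi
    refine Finset.sum_eq_single i (fun j _ hj => off i j hj.symm) (fun h => absurd hi h)
  rw [hexp, Finset.sum_congr rfl hdiag]
  have hterm : ∀ i ∈ Finset.range (N+1), ‖φ (q i) (p i) - φ (q i * p i) g‖ ≤
      C * (1 + ‖g‖) * ((k + 1) * R ^ k) * δ ^ 2 := by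
    intro i _
    calc ‖φ (q i) (p i) - φ (q i * p i) g‖ ≤ ‖φ (q i) (p i)‖ + ‖φ (q i * p i) g‖ := norm_sub_le _ _
      _ ≤ C * ‖q i‖ * ‖p i‖ + C * (‖q i‖ * ‖p i‖) * ‖g‖ := by
        refine add_le_add (hb _ _) ((hb _ _).trans ?_)
        gcongr
        exact norm_mul_le _ _
      _ = C * (1 + ‖g‖) * (‖q i‖ * ‖p i‖) := by ring
      _ ≤ C * (1 + ‖g‖) * ((δ * ((k + 1) * R ^ k)) * δ) := by
        gcongr
        · exact hqn i
        · exact hpn i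
      _ = _ := by ring
  refine (norm_sum_le_of_le _ hterm).trans ?_
  rw [Finset.sum_const, Finset.card_range, nsmul_eq_mul]
  apply le_of_eq
  rw [hδ]; push_cast; field_simp

theorem bil (φ : C(X, ℝ)₀ →ₗ[ℝ] C(X, ℝ)₀ →ₗ[ℝ] F) (C : ℝ) (hC : 0 ≤ C)
    (hb : ∀ u v, ‖φ u v‖ ≤ C * ‖u‖ * ‖v‖) (hs : ∀ u v, φ u v = φ v u)
    (ho : ∀ u v, u * v = 0 → φ u v = 0) (f g : C(X, ℝ)₀) (hf : ∀ x, 0 ≤ f x)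
    (hfg : f * g = f) (k : ℕ) :
    φ (nupow f (k+1)) f = φ (nupow f (k+2)) g := by
  have e : nupow f (k+2) = nupow f (k+1) * f := by rw [mul_comm]; rfl
  rw [e, ← sub_eq_zero, ← norm_le_zero_iff]
  have h := bil_aux φ C hC hb hs ho f g hf hfg k (‖f‖ + 1) (by positivity)
    (fun x => (le_abs_self _).trans ((cz_le_norm f x).trans (by linarith)))
  refine ge_of_tendsto' (x := atTop) (f := fun N : ℕ => _ * (1 / ((N : ℝ) + 1))) ?_ h
  have h5 := (tendsto_one_div_add_atTop_nhds_zero_nat (𝕜 := ℝ)).const_mul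
    (C * (1 + ‖g‖) * ((k + 1) * (‖f‖ + 1) ^ k) * (‖f‖ + 1) ^ 2)
  rw [mul_zero] at h5
  exact h5

theorem comm_main (f g : C(X, ℝ)₀) (hf : ∀ x, 0 ≤ f x) (hfg : f * g = f) {n : ℕ} :
    ∀ {M : ContinuousMultilinearMap ℝ (fun _ : Fin (n+1) => C(X, ℝ)₀) F} (_ : SymM M) (_ : OA M),
    M (fun _ => f) = M (Fin.cons (nupow f (n+1)) (fun _ => g)) := by
  induction n with
  | zero =>
    intro M hM ho
    congr 1; ext i; fin_cases i; rfl
  | succ n ih =>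
    intro M hM ho
    have h1 := ih (hM.curryLeft f) (OA.curryLeft hM ho f)
    rw [ContinuousMultilinearMap.curryLeft_apply, ContinuousMultilinearMap.curryLeft_apply,
      hM.swap] at h1
    have cc : ∀ (N : ℕ) (z : C(X, ℝ)₀), (Fin.cons z (fun _ => z) : Fin (N+1) → C(X, ℝ)₀) = fun _ => z := by
      intro N z; ext i; refine Fin.cases ?_ (fun j => ?_) i <;> simp
    rw [cc] at h1
    rw [h1, ← cc n g]
    let φ : C(X, ℝ)₀ →ₗ[ℝ] C(X, ℝ)₀ →ₗ[ℝ] F :=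
      LinearMap.mk₂ ℝ (fun u v => M (Fin.cons u (Fin.cons v (fun _ => g))))
        (fun u u' v => M.cons_add _ _ _) (fun c u v => M.cons_smul _ _ _)
        (fun u v v' => (M.curryLeft u).cons_add (fun _ => g) v v')
        (fun c u v => (M.curryLeft u).cons_smul (fun _ => g) c v)
    refine bil φ (‖M‖ * ‖g‖ ^ n) (by positivity) ?_ ?_ ?_ f g hf hfg n
    · intro u v
      refine (M.le_opNorm _).trans (le_of_eq ?_)
      rw [Fin.prod_univ_succ, Fin.prod_univ_succ]
      simp
      ring
    · intro u v
      exact hM.swap u v _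
    · intro u v huv
      exact OA.pair hM ho u v g huv
end bil

section sqd
variable {B : Type*} [CStarAlgebra B] [PartialOrder B] [StarOrderedRing B]

theorem sqdiff_le {z w : B} (hz : 0 ≤ z) (hw : 0 ≤ w) {ε : ℝ} (hε : 0 ≤ ε)
    (h : ‖z * z - w * w‖ ≤ ε ^ 2) : z ≤ w + algebraMap ℝ B ε := by
  have hzs : IsSelfAdjoint z := .of_nonneg hz
  have hws : IsSelfAdjoint w := .of_nonneg hw
  have hsa : IsSelfAdjoint (z * z - w * w) := by
    rw [IsSelfAdjoint, star_sub, star_mul, star_mul, hzs.star_eq, hws.star_eq]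
  have hE : (0 : B) ≤ algebraMap ℝ B ε := by
    simpa using (algebraMap_nonneg B hε)
  have h1 : z * z - w * w ≤ algebraMap ℝ B (ε ^ 2) :=
    hsa.le_algebraMap_norm_self.trans (algebraMap_mono B h)
  have h2 : 0 ≤ ε • w := smul_nonneg hε hw
  have h3 : (w + algebraMap ℝ B ε) * (w + algebraMap ℝ B ε)
      = w * w + (ε • w + ε • w) + algebraMap ℝ B (ε ^ 2) := by
    rw [pow_two, map_mul]
    simp only [Algebra.algebraMap_eq_smul_one, mul_add, add_mul, mul_smul_comm, smul_mul_assoc,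
      one_mul, mul_one, smul_add]
    abel
  have h4 : z * z ≤ (w + algebraMap ℝ B ε) * (w + algebraMap ℝ B ε) := by
    rw [h3]
    calc z * z ≤ algebraMap ℝ B (ε ^ 2) + w * w := sub_le_iff_le_add.mp h1
      _ ≤ (algebraMap ℝ B (ε ^ 2) + w * w) + (ε • w + ε • w) :=
        le_add_of_nonneg_right (add_nonneg h2 h2)
      _ = _ := by abel
  have h5 := CFC.sqrt_le_sqrt _ _ h4
  rwa [CFC.sqrt_mul_self z hz, CFC.sqrt_mul_self _ (add_nonneg hw hE)] at h5

theorem sqdiff {z w : B} (hz : 0 ≤ z) (hw : 0 ≤ w) {ε : ℝ} (hε : 0 ≤ ε)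
    (h : ‖z * z - w * w‖ ≤ ε ^ 2) : ‖z - w‖ ≤ 3 * ε := by
  have h1 := sqdiff_le hz hw hε h
  have h2 := sqdiff_le hw hz hε (by rwa [norm_sub_rev])
  have h3 : 0 ≤ z - w + algebraMap ℝ B ε := by
    have : z - w + algebraMap ℝ B ε = z + algebraMap ℝ B ε - w := by abel
    rw [this]; exact sub_nonneg.mpr h2
  have h4 : z - w + algebraMap ℝ B ε ≤ algebraMap ℝ B (2 * ε) := by
    rw [two_mul, map_add]
    gcongr
    rw [sub_le_iff_le_add, add_comm]; exact h1
  have h5 := (CStarAlgebra.norm_le_iff_le_algebraMap _ (by positivity) h3).mpr h4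
  have h6 : ‖algebraMap ℝ B ε‖ ≤ ε := by
    exact (CStarAlgebra.norm_le_iff_le_algebraMap _ hε (algebraMap_nonneg B hε)).mpr le_rfl
  calc ‖z - w‖ = ‖(z - w + algebraMap ℝ B ε) - algebraMap ℝ B ε‖ := by congr 1; abel
    _ ≤ ‖z - w + algebraMap ℝ B ε‖ + ‖algebraMap ℝ B ε‖ := norm_sub_le _ _
    _ ≤ 3 * ε := by linarith
end sqd

section alg
variable {A : Type*} [NonUnitalCStarAlgebra A] [PartialOrder A] [StarOrderedRing A]

/-- comparison of `f` with `a` when `f + g = a + e`, `f g = f`. -/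
theorem split_close {a e f g : A} (ha : 0 ≤ a) (he : 0 ≤ e) (he1 : ‖e‖ ≤ 1)
    (hf : 0 ≤ f) (hg : 0 ≤ g) (hg1 : ‖g‖ ≤ 1) (hsum : f + g = a + e) (hfg : f * g = f)
    (hgf : g * f = f) {ε : ℝ} (hε : 0 ≤ ε)
    (hc : ‖a - a * e‖ + ‖a - e * a‖ ≤ ε ^ 2) : ‖f - a‖ ≤ 3 * ε := by
  have key : ∀ x : A, 0 ≤ x → ‖x‖ ≤ 1 → (0 : Unitization ℂ A) ≤ 1 - (x : Unitization ℂ A) := by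
    intro x hx hx1
    have h0 : (0 : Unitization ℂ A) ≤ (x : Unitization ℂ A) := Unitization.inr_nonneg_iff.mpr hx
    rw [sub_nonneg]
    rw [← CStarAlgebra.norm_le_one_iff_of_nonneg _ h0, Unitization.norm_inr]
    exact hx1
  have hz : (0 : Unitization ℂ A) ≤ f + (1 - (g : Unitization ℂ A)) :=
    add_nonneg (Unitization.inr_nonneg_iff.mpr hf) (key g hg hg1)
  have hw : (0 : Unitization ℂ A) ≤ a + (1 - (e : Unitization ℂ A)) :=
    add_nonneg (Unitization.inr_nonneg_iff.mpr ha) (key e he he1)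
  have hzw : ((f : Unitization ℂ A) + (1 - g)) - (a + (1 - (e : Unitization ℂ A)))
      = ((2 : ℝ) • (f - a) : A) := by
    have hg' : (g : Unitization ℂ A) = a + e - f := by
      rw [← Unitization.inr_add, ← hsum]; simp
    rw [hg', two_smul]; simp only [Unitization.inr_add, Unitization.inr_sub]; abel
  have hsq : ((f : Unitization ℂ A) + (1 - g)) * ((f : Unitization ℂ A) + (1 - g))
      - (a + (1 - (e : Unitization ℂ A))) * (a + (1 - (e : Unitization ℂ A)))
      = ((-(2 : ℝ)) • ((a - a * e) + (a - e * a)) : A) := by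
    have e1 : (f : Unitization ℂ A) * g = f := by rw [← Unitization.inr_mul, hfg]
    have e2 : (g : Unitization ℂ A) * f = f := by rw [← Unitization.inr_mul, hgf]
    have e3 : (f : Unitization ℂ A) + g = a + e := by
      rw [← Unitization.inr_add, ← Unitization.inr_add, hsum]
    have e4 : ((f : Unitization ℂ A) + (1 - g)) * ((f : Unitization ℂ A) + (1 - g))
      = ((f : Unitization ℂ A) + g - 1) * ((f : Unitization ℂ A) + g - 1) := by
      simp only [mul_add, add_mul, mul_sub, sub_mul, one_mul, mul_one, e1, e2]
      abel
    rw [e4, e3, neg_smul, two_smul]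
    simp only [Unitization.inr_add, Unitization.inr_sub, Unitization.inr_mul, Unitization.inr_neg]
    noncomm_ring
  have h1 := sqdiff hz hw (ε := 2 * ε) (by positivity) (by
    rw [hsq, Unitization.norm_inr, norm_smul]
    have := norm_add_le (a - a * e) (a - e * a)
    norm_num
    nlinarith)
  rw [hzw, Unitization.norm_inr, norm_smul] at h1
  norm_num at h1
  linarith
end alg

section alg2
variable {A : Type*} [NonUnitalCStarAlgebra A] [PartialOrder A] [StarOrderedRing A]
  {F : Type*} [NormedAddCommGroup F] [NormedSpace ℂ F]

theorem map_nupow {R S : Type*} [NonUnitalRing R] [NonUnitalRing S] (φ : R → S)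
    (h : ∀ x y, φ (x * y) = φ x * φ y) (a : R) (k : ℕ) :
    φ (nupow a (k + 1)) = nupow (φ a) (k + 1) := by
  induction k with
  | zero => rfl
  | succ k ih =>
    change φ (a * nupow a (k + 1)) = φ a * nupow (φ a) (k + 1)
    rw [h, ih]

theorem split_poly {n : ℕ} (L : ContinuousMultilinearMap ℂ (fun _ : Fin (n + 1) => A) F)
    (hL : ∀ (v : Fin (n + 1) → A) (σ : Equiv.Perm (Fin (n + 1))), (L fun i => v (σ i)) = L v)
    (hoa : ∀ a b : A, IsSelfAdjoint a → IsSelfAdjoint b → a * b = 0 →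
        L (fun _ => a + b) = L (fun _ => a) + L (fun _ => b))
    {x : A} (hx : 0 ≤ x) :
    ∃ f g : A, 0 ≤ f ∧ 0 ≤ g ∧ ‖g‖ ≤ 1 ∧ f + g = x ∧ f * g = f ∧ g * f = f ∧
      L (fun _ => f) = L (Fin.cons (nupow f (n + 1)) (fun _ => g)) := by
  have hxs : IsSelfAdjoint x := .of_nonneg hx
  let τ := cfcₙHom (R := ℝ) hxs
  let τL : C(quasispectrum ℝ x, ℝ)₀ →L[ℝ] A := cfcₙL (R := ℝ) hxs
  have hτL : ∀ f, τL f = τ f := fun f => rfl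
  let f : C(quasispectrum ℝ x, ℝ)₀ :=
    ⟨⟨fun s => max ((s : ℝ) - 1) 0, by fun_prop⟩, by simp⟩
  let g : C(quasispectrum ℝ x, ℝ)₀ :=
    ⟨⟨fun s => min (s : ℝ) 1, by fun_prop⟩, by simp⟩
  have hf : ∀ s, f s = max ((s : ℝ) - 1) 0 := fun s => rfl
  have hg : ∀ s, g s = min (s : ℝ) 1 := fun s => rfl
  have hs : ∀ s : quasispectrum ℝ x, 0 ≤ (s : ℝ) := fun s =>
    quasispectrum_nonneg_of_nonneg x hx (s : ℝ) s.2
  have hf0 : ∀ s, 0 ≤ f s := fun s => le_max_right _ _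
  have hg0 : ∀ s, 0 ≤ g s := fun s => le_min (hs s) zero_le_one
  have hfg : f * g = f := by
    ext s
    change f s * g s = f s
    rw [hf, hg]
    rcases le_total (s : ℝ) 1 with h | h
    · rw [max_eq_right (by linarith)]; simp
    · rw [min_eq_right h]; simp
  have hsum : f + g = ContinuousMapZero.id (quasispectrum ℝ x) := by
    ext s
    change f s + g s = (s : ℝ)
    rw [hf, hg]
    rcases le_total (s : ℝ) 1 with h | h
    · rw [max_eq_right (by linarith), min_eq_left h]; simp
    · rw [min_eq_right h, max_eq_left (by linarith)]; simp
  let M : ContinuousMultilinearMap ℝ (fun _ : Fin (n + 1) => C(quasispectrum ℝ x, ℝ)₀) F :=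
    (L.restrictScalars ℝ).compContinuousLinearMap (fun _ => τL)
  have hM : ∀ v, M v = L (fun i => τ (v i)) := fun v => rfl
  have hsym : SymM M := by
    intro v σ
    rw [hM, hM]
    exact hL (fun i => τ (v i)) σ
  have hMoa : OA M := by
    intro p q hpq
    rw [hM, hM, hM]
    simp only [map_add]
    refine hoa _ _ (cfcₙHom_predicate hxs p) (cfcₙHom_predicate hxs q) ?_
    change τ p * τ q = 0
    rw [← map_mul, hpq, map_zero]
  have hmain := comm_main f g hf0 hfg hsym hMoa
  refine ⟨τ f, τ g, ?_, ?_, ?_, ?_, ?_, ?_, ?_⟩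
  · exact (cfcₙHom_nonneg_iff hxs).mpr hf0
  · exact (cfcₙHom_nonneg_iff hxs).mpr hg0
  · have : ‖τ g‖ = ‖g‖ := norm_cfcₙHom x g hxs
    rw [this]
    refine cz_norm_le g zero_le_one fun s => ?_
    rw [abs_of_nonneg (hg0 s)]
    exact min_le_right _ _
  · rw [← map_add, hsum]; exact cfcₙHom_id hxs
  · rw [← map_mul, hfg]
  · rw [← map_mul, mul_comm, hfg]
  · rw [hM, hM] at hmain
    rw [hmain]
    congr 1
    ext i
    refine Fin.cases ?_ (fun j => ?_) i
    · simp only [Fin.cons_zero]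
      exact map_nupow τ (map_mul τ) f n
    · simp only [Fin.cons_succ]

theorem continuous_nupow {R : Type*} [NonUnitalRing R] [TopologicalSpace R] [ContinuousMul R]
    (k : ℕ) : Continuous fun a : R => nupow a (k + 1) := by
  induction k with
  | zero => exact continuous_id
  | succ k ih => exact continuous_id.mul ih

theorem tendsto_pos {n : ℕ} (L : ContinuousMultilinearMap ℂ (fun _ : Fin (n + 1) => A) F)
    (hL : ∀ (v : Fin (n + 1) → A) (σ : Equiv.Perm (Fin (n + 1))), (L fun i => v (σ i)) = L v)
    (hoa : ∀ a b : A, IsSelfAdjoint a → IsSelfAdjoint b → a * b = 0 →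
        L (fun _ => a + b) = L (fun _ => a) + L (fun _ => b))
    {l : Filter A} (hl : l.IsIncreasingApproximateUnit) {a : A} (ha : 0 ≤ a) :
    Tendsto (fun e => L (Fin.cons (nupow a (n + 1)) (fun _ => e))) l (𝓝 (L (fun _ => a))) := by
  have hex : ∀ e : A, ∃ f g : A, 0 ≤ e → (0 ≤ f ∧ 0 ≤ g ∧ ‖g‖ ≤ 1 ∧ f + g = a + e ∧ f * g = f ∧
      g * f = f ∧ L (fun _ => f) = L (Fin.cons (nupow f (n + 1)) (fun _ => g))) := by
    intro e
    by_cases he : 0 ≤ e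
    · obtain ⟨f, g, h⟩ := split_poly L hL hoa (add_nonneg ha he)
      exact ⟨f, g, fun _ => h⟩
    · exact ⟨0, 0, fun h => absurd h he⟩
  choose f g hfg using hex
  have hbound : ∀ᶠ e in l, ‖f e - a‖ ≤ 3 * √(‖a - a * e‖ + ‖a - e * a‖) := by
    filter_upwards [hl.eventually_nonneg, hl.eventually_norm] with e he he1
    obtain ⟨h1, h2, h3, h4, h5, h6, -⟩ := hfg e he
    exact split_close ha he he1 h1 h2 h3 h4 h5 h6 (Real.sqrt_nonneg _)
      (by rw [Real.sq_sqrt (by positivity)])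
  have hlim : Tendsto (fun e => 3 * √(‖a - a * e‖ + ‖a - e * a‖)) l (𝓝 0) := by
    have h1 : Tendsto (fun e => a * e) l (𝓝 a) := hl.tendsto_mul_left a
    have h2 : Tendsto (fun e => e * a) l (𝓝 a) := hl.tendsto_mul_right a
    have h3 := (((tendsto_const_nhds (x := a)).sub h1).norm.add
      ((tendsto_const_nhds (x := a)).sub h2).norm).sqrt.const_mul 3
    simpa using h3
  have hfa : Tendsto f l (𝓝 a) := by
    rw [tendsto_iff_norm_sub_tendsto_zero]
    exact squeeze_zero' (Eventually.of_forall fun _ => norm_nonneg _) hbound hlim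
  have hnf : Tendsto (fun e => nupow (f e) (n + 1)) l (𝓝 (nupow a (n + 1))) :=
    ((continuous_nupow n).tendsto a).comp hfa
  have hLf : Tendsto (fun e => L (fun _ => f e)) l (𝓝 (L (fun _ => a))) :=
    (L.cont.tendsto _).comp (tendsto_pi_nhds.mpr fun _ => hfa)
  have hgoal : Tendsto (fun e => L (Fin.cons (nupow a (n + 1)) (fun _ => e))
      - L (fun _ => f e)) l (𝓝 0) := by
    set C : ℝ := ‖nupow a (n + 1)‖ + 1 with hC
    have hC0 : 0 ≤ C := by positivity
    let d : A → (Fin (n + 1) → A) := fun e =>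
      Fin.cons (nupow a (n + 1) - nupow (f e) (n + 1)) (fun _ => f e - a)
    have hd : Tendsto (fun e => ‖d e‖) l (𝓝 0) := by
      have : Tendsto d l (𝓝 0) := by
        refine tendsto_pi_nhds.mpr fun i => ?_
        refine Fin.cases ?_ (fun j => ?_) i
        · simp only [d, Fin.cons_zero]
          simpa using (tendsto_const_nhds (x := nupow a (n + 1))).sub hnf
        · simp only [d, Fin.cons_succ]
          simpa using hfa.sub (tendsto_const_nhds (x := a))
      simpa using this.norm
    have hnb : ∀ᶠ e in l, ‖nupow (f e) (n + 1)‖ ≤ C :=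
      (hnf.norm.eventually_lt_const (lt_add_one _)).mono fun _ h => h.le
    refine squeeze_zero_norm' (a := fun e => ‖L‖ * (n + 1 : ℕ) * C ^ n * ‖d e‖) ?_ ?_
    · filter_upwards [hl.eventually_nonneg, hl.eventually_norm, hnb] with e he he1 hb
      obtain ⟨h1, h2, h3, h4, h5, h6, h7⟩ := hfg e he
      rw [h7]
      refine (L.norm_image_sub_le _ _).trans ?_
      have hdd : (Fin.cons (nupow a (n + 1)) (fun _ => e) : Fin (n + 1) → A)
          - Fin.cons (nupow (f e) (n + 1)) (fun _ => g e) = d e := by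
        ext i
        refine Fin.cases ?_ (fun j => ?_) i
        · simp [d]
        · simp only [d, Pi.sub_apply, Fin.cons_succ]
          rw [sub_eq_sub_iff_add_eq_add, h4, add_comm]
      have hn1 : ‖(Fin.cons (nupow a (n + 1)) (fun _ => e) : Fin (n + 1) → A)‖ ≤ C := by
        refine (pi_norm_le_iff_of_nonneg hC0).mpr fun i => ?_
        refine Fin.cases ?_ (fun j => ?_) i
        · simp [hC]
        · simp only [Fin.cons_succ]; have := norm_nonneg (nupow a (n + 1)); linarith
      have hn2 : ‖(Fin.cons (nupow (f e) (n + 1)) (fun _ => g e) : Fin (n + 1) → A)‖ ≤ C := by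
        refine (pi_norm_le_iff_of_nonneg hC0).mpr fun i => ?_
        refine Fin.cases ?_ (fun j => ?_) i
        · simpa using hb
        · simp only [Fin.cons_succ]; have := norm_nonneg (nupow a (n + 1)); linarith
      rw [hdd, Fintype.card_fin, Nat.add_sub_cancel]
      have := max_le hn1 hn2
      gcongr
    · simpa using hd.const_mul (‖L‖ * (n + 1 : ℕ) * C ^ n)
  simpa using hgoal.add hLf

theorem nupow_nnrpow (c : A) (x : NNReal) (hx : 0 < x) (k : ℕ) :
    nupow (c ^ x) (k + 1) = c ^ (((k + 1 : ℕ) : NNReal) * x) := by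
  induction k with
  | zero => simp [nupow]
  | succ k ih =>
    change c ^ x * nupow (c ^ x) (k + 1) = _
    rw [ih, ← CFC.nnrpow_add hx (by positivity)]
    congr 1
    push_cast
    ring

theorem exists_root {c : A} (hc : 0 ≤ c) (k : ℕ) : ∃ b : A, 0 ≤ b ∧ nupow b (k + 1) = c := by
  refine ⟨c ^ (((k + 1 : ℕ) : NNReal)⁻¹), CFC.nnrpow_nonneg, ?_⟩
  rw [nupow_nnrpow _ _ (by positivity), mul_inv_cancel₀ (by positivity), CFC.nnrpow_one c hc]

theorem exists_T {n : ℕ} (L : ContinuousMultilinearMap ℂ (fun _ : Fin (n + 1) => A) F)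
    (hL : ∀ (v : Fin (n + 1) → A) (σ : Equiv.Perm (Fin (n + 1))), (L fun i => v (σ i)) = L v)
    (hoa : ∀ a b : A, IsSelfAdjoint a → IsSelfAdjoint b → a * b = 0 →
        L (fun _ => a + b) = L (fun _ => a) + L (fun _ => b)) :
    ∃ T : A →L[ℂ] F, ∀ a : A, 0 ≤ a → L (fun _ => a) = T (nupow a (n + 1)) := by
  have hl := CStarAlgebra.increasingApproximateUnit A
  set l := CStarAlgebra.approximateUnit A
  haveI : l.NeBot := hl.neBot
  let G : A → (A →ₗ[ℂ] F) := fun e =>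
    { toFun := fun a => L (Fin.cons a (fun _ => e))
      map_add' := fun x y => L.cons_add _ x y
      map_smul' := fun c x => L.cons_smul _ c x }
  have hG : ∀ e a, G e a = L (Fin.cons a (fun _ => e)) := fun _ _ => rfl
  have hpos : ∀ c : A, 0 ≤ c → ∃ y, Tendsto (fun e => G e c) l (𝓝 y) := by
    intro c hc
    obtain ⟨b, hb, rfl⟩ := exists_root hc n
    exact ⟨_, tendsto_pos L hL hoa hl hb⟩
  have hall : ∀ a : A, ∃ y, Tendsto (fun e => G e a) l (𝓝 y) := by
    intro a
    obtain ⟨x, hx, -, rfl⟩ := CStarAlgebra.exists_sum_four_nonneg a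
    choose y hy using fun i => hpos (x i) (hx i)
    refine ⟨∑ i : Fin 4, Complex.I ^ (i : ℕ) • y i, ?_⟩
    simp only [map_sum, map_smul]
    exact tendsto_finsetSum _ fun i _ => (hy i).const_smul _
  choose t ht using hall
  let T₀ : A →ₗ[ℂ] F := linearMapOfTendsto t G (l := l) (tendsto_pi_nhds.mpr ht)
  have hT₀ : ∀ a, T₀ a = t a := fun _ => rfl
  refine ⟨T₀.mkContinuous ‖L‖ fun a => ?_, fun a ha => ?_⟩
  · rw [hT₀]
    refine le_of_tendsto (ht a).norm ?_
    filter_upwards [hl.eventually_norm] with e he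
    rw [hG]
    refine (L.le_opNorm _).trans ?_
    gcongr
    rw [Fin.prod_univ_succ]
    simp only [Fin.cons_zero, Fin.cons_succ, Finset.prod_const]
    exact mul_le_of_le_one_right (norm_nonneg _) (pow_le_one₀ (norm_nonneg _) he)
  · rw [LinearMap.mkContinuous_apply, hT₀]
    exact tendsto_nhds_unique (tendsto_pos L hL hoa hl ha) (ht _)

theorem analytic_nupow (x y : A) (k : ℕ) :
    AnalyticOnNhd ℂ (fun z : ℂ => nupow (x + z • y) (k + 1)) Set.univ := by
  have h0 : AnalyticOnNhd ℂ (fun z : ℂ => x + z • y) Set.univ := fun z _ =>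
    analyticAt_const.add (analyticAt_id.smul analyticAt_const)
  induction k with
  | zero => exact h0
  | succ k ih =>
    intro z hz
    exact ((ContinuousLinearMap.mul ℂ A).analyticAt_bilinear _).comp₂ (h0 z hz) (ih z hz)

theorem line_ext {n : ℕ} (L : ContinuousMultilinearMap ℂ (fun _ : Fin (n + 1) => A) F)
    (T : A →L[ℂ] F) (x y : A)
    (h : ∀ t : ℝ, 0 ≤ t → L (fun _ => x + (t : ℂ) • y) = T (nupow (x + (t : ℂ) • y) (n + 1))) 
    (z : ℂ) : L (fun _ => x + z • y) = T (nupow (x + z • y) (n + 1)) := by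
  have h0 : AnalyticOnNhd ℂ (fun z : ℂ => (fun _ : Fin (n + 1) => x + z • y)) Set.univ :=
    fun z _ => AnalyticAt.pi fun _ => analyticAt_const.add (analyticAt_id.smul analyticAt_const)
  have h1 : AnalyticOnNhd ℂ (fun z : ℂ => L (fun _ => x + z • y)) Set.univ := fun z hz =>
    (L.analyticAt).comp (h0 z hz)
  have h2 : AnalyticOnNhd ℂ (fun z : ℂ => T (nupow (x + z • y) (n + 1))) Set.univ := fun z hz =>
    (T.analyticAt _).comp (analytic_nupow x y n z hz)
  refine congrFun (h1.eq_of_frequently_eq (z₀ := 0) h2 ?_) z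
  have ht : Tendsto (fun t : ℝ => (t : ℂ)) (𝓝[>] 0) (𝓝[≠] 0) := by
    refine tendsto_nhdsWithin_iff.mpr ⟨?_, ?_⟩
    · have : Tendsto (fun t : ℝ => (t : ℂ)) (𝓝 0) (𝓝 ((0 : ℝ) : ℂ)) :=
        Complex.continuous_ofReal.tendsto 0
      simpa using this.mono_left nhdsWithin_le_nhds
    · filter_upwards [self_mem_nhdsWithin] with t ht
      simpa using ht.ne'
  refine ht.frequently (Eventually.frequently ?_)
  filter_upwards [self_mem_nhdsWithin] with t ht
  exact h t (le_of_lt ht)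

theorem full_ext {n : ℕ} (L : ContinuousMultilinearMap ℂ (fun _ : Fin (n + 1) => A) F)
    (T : A →L[ℂ] F) (h : ∀ a : A, 0 ≤ a → L (fun _ => a) = T (nupow a (n + 1))) (a : A) :
    L (fun _ => a) = T (nupow a (n + 1)) := by
  obtain ⟨x, hx, -, rfl⟩ := CStarAlgebra.exists_sum_four_nonneg a
  have hr : ∀ (t : ℝ) (b : A), 0 ≤ t → 0 ≤ b → 0 ≤ (t : ℂ) • b := fun t b ht hb => by
    rw [Complex.coe_smul]; exact smul_nonneg ht hb
  have s1 : ∀ (b c d : A), 0 ≤ b → 0 ≤ c → 0 ≤ d → ∀ z : ℂ,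
      L (fun _ => x 0 + b + c + z • d) = T (nupow (x 0 + b + c + z • d) (n + 1)) := by
    intro b c d hb hc hd z
    refine line_ext L T _ _ (fun t ht => h _ ?_) z
    exact add_nonneg (add_nonneg (add_nonneg (hx 0) hb) hc) (hr t d ht hd)
  have s2 : ∀ (b c d : A), 0 ≤ b → 0 ≤ c → 0 ≤ d → ∀ z w : ℂ,
      L (fun _ => x 0 + b + w • d + z • c) = T (nupow (x 0 + b + w • d + z • c) (n + 1)) := by
    intro b c d hb hc hd z w
    refine line_ext L T _ _ (fun t ht => ?_) z
    rw [add_right_comm]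
    exact s1 b _ d hb (hr t c ht hc) hd w
  have s3 : ∀ (b c d : A), 0 ≤ b → 0 ≤ c → 0 ≤ d → ∀ z w u : ℂ,
      L (fun _ => x 0 + w • d + z • c + u • b)
        = T (nupow (x 0 + w • d + z • c + u • b) (n + 1)) := by
    intro b c d hb hc hd z w u
    refine line_ext L T _ _ (fun t ht => ?_) u
    have : x 0 + w • d + z • c + (t : ℂ) • b = x 0 + (t : ℂ) • b + w • d + z • c := by abel
    rw [this]
    exact s2 _ c d (hr t b ht hb) hc hd z w
  have := s3 (x 3) (x 2) (x 1) (hx 3) (hx 2) (hx 1) (Complex.I ^ 2) (Complex.I ^ 1) (Complex.I ^ 3)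
  have e : ∑ i : Fin 4, Complex.I ^ (i : ℕ) • x i
      = x 0 + Complex.I ^ 1 • x 1 + Complex.I ^ 2 • x 2 + Complex.I ^ 3 • x 3 := by
    rw [Fin.sum_univ_four]
    simp
  rw [e]
  exact this
end alg2

theorem nupow_add_of_orth {R : Type*} [NonUnitalRing R] {a b : R} (hab : a * b = 0)
    (hba : b * a = 0) (k : ℕ) :
    nupow (a + b) (k + 1) = nupow a (k + 1) + nupow b (k + 1) := by
  have hz : ∀ (a b : R), a * b = 0 → ∀ k, a * nupow b (k + 1) = 0 := by
    intro a b h k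
    cases k with
    | zero => exact h
    | succ k =>
      change a * (b * nupow b (k + 1)) = 0
      rw [← mul_assoc, h, zero_mul]
  induction k with
  | zero => rfl
  | succ k ih =>
    change (a + b) * nupow (a + b) (k + 1) = a * nupow a (k + 1) + b * nupow b (k + 1)
    rw [ih, add_mul, mul_add, mul_add, hz a b hab, hz b a hba, add_zero, zero_add]

/-- for a bounded `n`-homogeneous polynomial `P : A → F` on a C*-algebra,
the following are equivalent: (1) `P(a) = T(aⁿ)` for a bounded linear `T`;
(2) `P` is orthogonally additive on `A`; (3) `P` is orthogonally additive on `A_sa`. -/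
theorem stmt_5 {A : Type*} [NonUnitalCStarAlgebra A]
    {F : Type*} [NormedAddCommGroup F] [NormedSpace ℂ F]
    (n : ℕ) (hn : 0 < n) (P : A → F) (hP : IsHomogPolynomial n P) :
    ((∃ T : A →L[ℂ] F, ∀ a : A, P a = T (nupow a n)) ↔
      (∀ a b : A, a * b = 0 → b * a = 0 → P (a + b) = P a + P b)) ∧
    ((∀ a b : A, a * b = 0 → b * a = 0 → P (a + b) = P a + P b) ↔
      (∀ a b : A, IsSelfAdjoint a → IsSelfAdjoint b → a * b = 0 →
        P (a + b) = P a + P b)) := by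
  obtain ⟨n, rfl⟩ : ∃ m, n = m + 1 := ⟨n - 1, by omega⟩
  obtain ⟨L, hL, hPL⟩ := hP
  have h12 : (∃ T : A →L[ℂ] F, ∀ a : A, P a = T (nupow a (n + 1))) →
      (∀ a b : A, a * b = 0 → b * a = 0 → P (a + b) = P a + P b) := by
    rintro ⟨T, hT⟩ a b hab hba
    rw [hT, hT, hT, nupow_add_of_orth hab hba, map_add]
  have h23 : (∀ a b : A, a * b = 0 → b * a = 0 → P (a + b) = P a + P b) →
      (∀ a b : A, IsSelfAdjoint a → IsSelfAdjoint b → a * b = 0 →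
        P (a + b) = P a + P b) := by
    intro h a b ha hb hab
    refine h a b hab ?_
    have := congrArg star hab
    rwa [star_mul, ha.star_eq, hb.star_eq, star_zero] at this
  have h31 : (∀ a b : A, IsSelfAdjoint a → IsSelfAdjoint b → a * b = 0 →
        P (a + b) = P a + P b) →
      (∃ T : A →L[ℂ] F, ∀ a : A, P a = T (nupow a (n + 1))) := by
    intro h
    letI := CStarAlgebra.spectralOrder A
    haveI := CStarAlgebra.spectralOrderedRing A
    obtain ⟨T, hT⟩ := exists_T L hL (fun a b ha hb hab => by
      rw [← hPL, ← hPL, ← hPL]; exact h a b ha hb hab)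
    exact ⟨T, fun a => by rw [hPL]; exact full_ext L T hT a⟩
  exact ⟨⟨h12, fun h => h31 (h23 h)⟩, ⟨h23, fun h => h12 (h31 h)⟩⟩
end

section
/- Let A, B be C*-algebras and J : A → B a Jordan homomorphism with P(a) = hJ(a)ⁿ for an invertible central element h of M(B), where B = span P(A) and P is zero product preserving on all of A. Then the kernel of J is a closed two-sided ideal, and J is injective if and only if P has trivial positive kernel (P(a) = 0, a ≥ 0 implies a = 0). -/
open scoped ComplexOrder MultiplierAlgebra

section Jord
variable {R S : Type*} [NonUnitalRing R] [NonUnitalRing S] [Module ℂ R] [Module ℂ S]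

theorem jord_triple [IsScalarTower ℂ R R] [SMulCommClass ℂ R R] (J : R →ₗ[ℂ] S)
    (hJ : ∀ a b : R, J (a * b + b * a) = J a * J b + J b * J a) (a x : R) :
    J (a * x * a) = J a * J x * J a := by
  have h1 := hJ a (a * x + x * a)
  have h2 := hJ (a * a) x
  have h3 : J (a * a) = J a * J a := by
    have := hJ a a
    rw [← two_smul ℂ, ← two_smul ℂ, map_smul] at this
    exact smul_right_injective _ (two_ne_zero) this
  rw [hJ a x] at h1
  rw [h3] at h2
  have e : (2 : ℂ) • (a * x * a) = (a * (a * x + x * a) + (a * x + x * a) * a)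
      - (a * a * x + x * (a * a)) := by
    rw [two_smul]; noncomm_ring
  have := congrArg J e
  rw [map_sub, h1, h2, map_smul] at this
  apply smul_right_injective S (two_ne_zero (α := ℂ))
  simp only
  rw [this, two_smul]; noncomm_ring

theorem jord_triple' [IsScalarTower ℂ R R] [SMulCommClass ℂ R R] (J : R →ₗ[ℂ] S)
    (hJ : ∀ a b : R, J (a * b + b * a) = J a * J b + J b * J a) (a b x : R) :
    J (a * x * b + b * x * a) = J a * J x * J b + J b * J x * J a := by
  have h := jord_triple J hJ (a + b) x
  have e : a * x * b + b * x * a = (a + b) * x * (a + b) - a * x * a - b * x * b := by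
    noncomm_ring
  rw [e, map_sub, map_sub, h, jord_triple J hJ, jord_triple J hJ, map_add]
  noncomm_ring

/-- Nonunital powers: `npw a k = a ^ (k+1)`. -/
def npw {R : Type*} [NonUnitalRing R] (a : R) : ℕ → R
  | 0 => a
  | k + 1 => npw a k * a

theorem npw_comm (a : R) (k : ℕ) : npw a k * a = a * npw a k := by
  induction k with
  | zero => rfl
  | succ k ih => simp only [npw]; rw [← mul_assoc, ← ih]

theorem jord_npw (J : R →ₗ[ℂ] S)
    (hJ : ∀ a b : R, J (a * b + b * a) = J a * J b + J b * J a) (a : R) (k : ℕ) :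
    J (npw a k) = npw (J a) k := by
  induction k with
  | zero => rfl
  | succ k ih =>
    have h := hJ (npw a k) a
    rw [← npw_comm, ih, ← npw_comm, ← two_smul ℂ, ← two_smul ℂ, map_smul] at h
    exact smul_right_injective _ (two_ne_zero) h

end Jord

theorem jord_semi {B : Type*} [NonUnitalCStarAlgebra B] (b : B) (hb : ∀ z, b * z * b = 0) :
    b = 0 := by
  have h := hb (star b)
  have h2 : star (star b * b) * (star b * b) = 0 := by
    rw [star_mul, star_star, mul_assoc, ← mul_assoc b, h, mul_zero]
  rw [CStarRing.star_mul_self_eq_zero_iff] at h2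
  exact (CStarRing.star_mul_self_eq_zero_iff _).1 h2

theorem jord_posum {B : Type*} [NonUnitalCStarAlgebra B] (c : B)
    (hc : c * star c + star c * c = 0) : c = 0 := by
  let _ := CStarAlgebra.spectralOrder B
  let _ := CStarAlgebra.spectralOrderedRing B
  have h := (add_eq_zero_iff_of_nonneg (mul_star_self_nonneg c) (star_mul_self_nonneg c)).1 hc
  exact (CStarRing.star_mul_self_eq_zero_iff _).1 h.2

/-- Extension to the unitization. -/
noncomputable def jordU {A B : Type*} [NonUnitalCStarAlgebra A] [NonUnitalCStarAlgebra B]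
    (J : A →ₗ[ℂ] B) : Unitization ℂ A →ₗ[ℂ] Unitization ℂ B where
  toFun x := Unitization.inl x.fst + Unitization.inr (J x.snd)
  map_add' x y := by ext <;> simp
  map_smul' x y := by ext <;> simp

theorem jordU_jordan {A B : Type*} [NonUnitalCStarAlgebra A] [NonUnitalCStarAlgebra B]
    (J : A →ₗ[ℂ] B) (hJ : ∀ a b : A, J (a * b + b * a) = J a * J b + J b * J a)
    (x y : Unitization ℂ A) :
    jordU J (x * y + y * x) = jordU J x * jordU J y + jordU J y * jordU J x := by
  have := hJ x.snd y.snd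
  rw [map_add] at this
  ext
  · simp [jordU]
  · simp only [jordU, LinearMap.coe_mk, AddHom.coe_mk, Unitization.snd_add, Unitization.snd_mul,
      Unitization.fst_add, Unitization.fst_mul, map_add, map_smul, Unitization.snd_inl,
      Unitization.snd_inr, Unitization.fst_inl, Unitization.fst_inr, zero_add, add_zero]
    have e1 : J (x.snd * y.snd) = J x.snd * J y.snd + J y.snd * J x.snd - J (y.snd * x.snd) :=
      eq_sub_of_add_eq this
    rw [e1]
    abel

theorem jord_norm {A B : Type*} [NonUnitalCStarAlgebra A] [NonUnitalCStarAlgebra B]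
    (J : A →ₗ[ℂ] B) (hJ : ∀ a b : A, J (a * b + b * a) = J a * J b + J b * J a)
    (v : A) (hv : IsSelfAdjoint (J v)) : ‖J v‖ ≤ ‖v‖ := by
  have key : ∀ e : Unitization ℂ A, IsUnit e → IsUnit (jordU J e) := by
    rintro e ⟨u, rfl⟩
    have h := jord_triple (jordU J) (jordU_jordan J hJ) u (↑u⁻¹ * ↑u⁻¹)
    have h1 : jordU J 1 = 1 := by ext <;> simp [jordU]
    have e1 : (u : Unitization ℂ A) * (↑u⁻¹ * ↑u⁻¹) * u = 1 := by
      simp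
    rw [e1, h1] at h
    exact isUnit_iff_exists_and_exists.2 ⟨⟨_, by rw [← mul_assoc]; exact h.symm⟩, ⟨_, h.symm⟩⟩
  have hsp : spectralRadius ℂ (Unitization.inr (J v) : Unitization ℂ B) ≤ ‖v‖₊ := by
    refine iSup₂_le fun l hl => ?_
    have hl' : l ∈ spectrum ℂ (Unitization.inr v : Unitization ℂ A) := by
      intro hu
      apply hl
      have := key _ hu
      rw [spectrum.mem_resolventSet_iff]
      have e2 : jordU J (algebraMap ℂ (Unitization ℂ A) l - (Unitization.inr v)) =
          algebraMap ℂ (Unitization ℂ B) l - Unitization.inr (J v) := by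
        rw [map_sub]
        congr 1 <;> ext <;> simp [jordU, Unitization.algebraMap_eq_inl]
      rw [e2] at this
      exact this
    have := spectrum.norm_le_norm_of_mem hl'
    rw [Unitization.norm_inr] at this
    exact_mod_cast this
  have hs : IsSelfAdjoint (Unitization.inr (J v) : Unitization ℂ B) := by
    simpa using hv
  rw [hs.spectralRadius_eq_nnnorm] at hsp
  rw [← Unitization.norm_inr (𝕜 := ℂ)]
  exact_mod_cast hsp

theorem npw_sa {A : Type*} [NonUnitalCStarAlgebra A] (a : A) (ha : IsSelfAdjoint a) (k : ℕ)
    (h : npw a k = 0) : a = 0 := by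
  induction k using Nat.strong_induction_on with
  | _ k ih =>
  match k, h, ih with
  | 0, h, _ => exact h
  | 1, h, _ =>
    rw [← CStarRing.star_mul_self_eq_zero_iff, ha.star_eq]; exact h
  | k + 2, h, ih =>
    apply ih (k + 1) (by omega)
    have hs : IsSelfAdjoint (npw a (k + 1)) := by
      clear h ih
      induction (k + 1) with
      | zero => exact ha
      | succ m ihm => 
        simp only [npw, IsSelfAdjoint, star_mul, ihm.star_eq, ha.star_eq, npw_comm]
    rw [← CStarRing.star_mul_self_eq_zero_iff, hs.star_eq]
    change npw a (k+1) * (npw a k * a) = 0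
    rw [npw_comm, ← mul_assoc]
    change npw a (k + 2) * npw a k = 0
    rw [h, zero_mul]

theorem npw_coe {B : Type*} [NonUnitalCStarAlgebra B] (b : B) (k : ℕ) :
    ((npw b k : B) : 𝓜(ℂ, B)) = (b : 𝓜(ℂ, B)) ^ (k + 1) := by
  induction k with
  | zero => simp [npw]
  | succ k ih => 
    rw [pow_succ, ← ih]
    exact map_mul (DoubleCentralizer.coeHom (𝕜 := ℂ) (A := B)) _ _

theorem coe_inj' {B : Type*} [NonUnitalCStarAlgebra B] {b c : B}
    (h : (b : 𝓜(ℂ, B)) = (c : 𝓜(ℂ, B))) : b = c := by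
  have h1 : (b - c) * star (b - c) = 0 := by
    have := congrArg (fun m : 𝓜(ℂ, B) => m.fst (star (b - c))) h
    simp only [DoubleCentralizer.coe_fst, ContinuousLinearMap.mul_apply'] at this
    rw [sub_mul, this, sub_self]
  exact sub_eq_zero.1 ((CStarRing.mul_star_self_eq_zero_iff _).1 h1)

theorem mul_coe' {B : Type*} [NonUnitalCStarAlgebra B] (h : 𝓜(ℂ, B)) (b : B) :
    h * (b : 𝓜(ℂ, B)) = ((h.fst b : B) : 𝓜(ℂ, B)) := by
  have hl : ∀ x y, h.fst (x * y) = h.fst x * y := by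
    intro x y
    have : ∀ z, z * (h.fst (x * y) - h.fst x * y) = 0 := by
      intro z
      have h1 := h.central z (x * y)
      have h2 := h.central z x
      rw [mul_sub, ← mul_assoc z (h.fst x), ← h1, ← h2, mul_assoc, sub_self]
    exact sub_eq_zero.1 ((CStarRing.star_mul_self_eq_zero_iff _).1 (this _))
  apply DoubleCentralizer.ext
  apply Prod.ext
  · ext x
    simp [hl]
  · ext x
    simp [h.central]

/-- let `J : A → B` be a Jordan homomorphism with `P(a) = hJ(a)ⁿ` for an
invertible central multiplier `h` of `B`, where `B = span P(A)` and `P` preserves zero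
products.  Then `ker J` is a closed two-sided ideal, and `J` is injective iff `P` has
trivial positive kernel. -/
theorem stmt_14 {A B : Type*}
    [NonUnitalCStarAlgebra A] [PartialOrder A] [StarOrderedRing A]
    [NonUnitalCStarAlgebra B]
    (n : ℕ) (hn : 0 < n) (P : A → B) (J : A →ₗ[ℂ] B)
    (hJordan : ∀ a b : A, J (a * b + b * a) = J a * J b + J b * J a)
    (h : 𝓜(ℂ, B)) (hinv : Invertible h)
    (hcentral : ∀ m : 𝓜(ℂ, B), h * m = m * h)
    (hform : ∀ a : A, (P a : 𝓜(ℂ, B)) = h * ((J a : 𝓜(ℂ, B)) ^ n))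
    (hspan : Submodule.span ℂ (Set.range P) = ⊤)
    (hzp : ∀ a b : A, a * b = 0 → P a * P b = 0) :
    IsClosed {a : A | J a = 0} ∧
    (∀ a x : A, J a = 0 → J (a * x) = 0 ∧ J (x * a) = 0) ∧
    (Function.Injective J ↔ ∀ a : A, 0 ≤ a → P a = 0 → a = 0) := by
  obtain ⟨k, rfl⟩ : ∃ k, n = k + 1 := ⟨n - 1, by omega⟩
  have hP : ∀ a, P a = h.fst (J (npw a k)) := by
    intro a
    apply coe_inj'
    rw [hform, ← npw_coe, mul_coe', jord_npw J hJordan]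
  have hfinj : ∀ b c : B, h.fst b = h.fst c → b = c := by
    intro b c hbc
    apply coe_inj'
    have e : h * (b : 𝓜(ℂ, B)) = h * (c : 𝓜(ℂ, B)) := by rw [mul_coe', mul_coe', hbc]
    exact (isUnit_of_invertible h).mul_left_cancel e
  have hsurj : Function.Surjective J := by
    intro b
    have hle : Submodule.span ℂ (Set.range P) ≤
        LinearMap.range ((h.fst : B →ₗ[ℂ] B).comp J) := by
      rw [Submodule.span_le]
      rintro _ ⟨a, rfl⟩
      exact ⟨npw a k, (hP a).symm⟩
    rw [hspan] at hle
    obtain ⟨y, hy⟩ := hle (Submodule.mem_top (x := h.fst b))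
    exact ⟨y, hfinj _ _ hy⟩
  have hideal : ∀ a x : A, J a = 0 → J (a * x) = 0 ∧ J (x * a) = 0 := by
    intro a x ha
    have hs : J (a * x) + J (x * a) = 0 := by
      rw [← map_add, hJordan, ha]; simp
    have hn : J (x * a) = - J (a * x) := by rw [eq_neg_iff_add_eq_zero, add_comm]; exact hs
    have hz : J (a * x) = 0 := by
      apply jord_semi
      intro b
      obtain ⟨z, rfl⟩ := hsurj b
      have h1 := jord_triple' J hJordan (a * x) (x * a) z
      have e : a * x * z * (x * a) + x * a * z * (a * x) =
          a * (x * z * x) * a + x * (a * z * a) * x := by noncomm_ring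
      rw [e, map_add, jord_triple J hJordan, jord_triple J hJordan x (a * z * a),
        jord_triple J hJordan a z,
        ha, hn] at h1
      simp only [zero_mul, mul_zero, add_zero, mul_neg, neg_mul] at h1
      have h2 : (-2 : ℂ) • (J (a * x) * J z * J (a * x)) = 0 := by
        rw [h1, neg_smul, two_smul]; abel
      exact (smul_eq_zero.1 h2).resolve_left (by norm_num)
    exact ⟨hz, by rw [hn, hz, neg_zero]⟩
  refine ⟨?_, hideal, ?_, ?_⟩
  · apply isClosed_of_closure_subset
    intro a ha
    obtain ⟨d, hd⟩ := hsurj (star (J a))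
    have hp : a * d + d * a ∈ closure {a : A | J a = 0} := by
      refine map_mem_closure (f := fun y => y * d + d * y) (by fun_prop) ha ?_
      intro y hy
      have := hideal y d hy
      simp [this.1, this.2]
    have hq : J (a * d + d * a) = J a * star (J a) + star (J a) * J a := by
      rw [hJordan, hd]
    have hsa : IsSelfAdjoint (J (a * d + d * a)) := by
      rw [hq]; simp [IsSelfAdjoint]
    apply jord_posum
    rw [← hq, ← norm_le_zero_iff]
    refine le_of_forall_pos_le_add fun ε hε => ?_
    obtain ⟨y, hy, hlt⟩ := Metric.mem_closure_iff.1 hp ε hε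
    have e : J (a * d + d * a - y) = J (a * d + d * a) := by
      rw [map_sub, show J y = 0 from hy, sub_zero]
    have := jord_norm J hJordan (a * d + d * a - y) (by rw [e]; exact hsa)
    rw [e] at this
    rw [dist_eq_norm] at hlt
    linarith
  · intro hi a ha hPa
    rw [hP] at hPa
    have h0 : J (npw a k) = 0 := hfinj _ _ (by rw [hPa, map_zero])
    exact npw_sa a (IsSelfAdjoint.of_nonneg ha) k (hi (by rw [h0, map_zero]))
  · intro hpos
    rw [injective_iff_map_eq_zero]
    intro a ha
    have h1 := (hideal a (star a) ha).2
    refine (CStarRing.star_mul_self_eq_zero_iff a).1 (hpos _ (star_mul_self_nonneg a) ?_)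
    rw [hP, jord_npw J hJordan, h1]
    have : npw (0 : B) k = 0 := by cases k <;> simp [npw]
    rw [this, map_zero]
end

section
/- Let A be a non-commutative C*-algebra. Then there exist elements a, b in A with ab = 0 but bⁿaⁿ ≠ 0 for every positive integer n. -/
/-- In a C*-algebra a nonzero element lies outside some maximal left ideal. -/
lemma exists_maximal_not_mem {B : Type*} [CStarAlgebra B] (c : B) (hc : c ≠ 0) :
    ∃ M : Ideal B, M.IsMaximal ∧ c ∉ M := by
  have : Nontrivial B := ⟨c, 0, hc⟩
  have hsa : IsSelfAdjoint (star c * c) := IsSelfAdjoint.star_mul_self c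
  have hn : ‖star c * c‖ ≠ 0 := by
    rw [norm_ne_zero_iff]
    intro h
    exact hc ((CStarRing.star_mul_self_eq_zero_iff c).1 h)
  obtain ⟨r, hr0, hr⟩ : ∃ r : ℝ, r ≠ 0 ∧ r ∈ spectrum ℝ (star c * c) := by
    rcases CStarAlgebra.norm_or_neg_norm_mem_spectrum hsa with h | h
    · exact ⟨_, hn, h⟩
    · exact ⟨_, neg_ne_zero.2 hn, h⟩
  rw [spectrum.mem_iff] at hr
  set e := algebraMap ℝ B r - star c * c with he
  have hesa : star e = e := by
    rw [he, star_sub, hsa.star_eq]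
    congr 1
    rw [Algebra.algebraMap_eq_smul_one, star_smul, star_one, star_trivial]
  have hne : Ideal.span {e} ≠ ⊤ := by
    intro h
    have h1 : (1 : B) ∈ Ideal.span {e} := by rw [h]; trivial
    obtain ⟨b, hb⟩ := Ideal.mem_span_singleton'.1 h1
    have hb' : e * star b = 1 := by
      have := congrArg star hb
      rwa [star_mul, hesa, star_one] at this
    have hbb : b = star b := left_inv_eq_right_inv hb hb'
    exact hr ⟨⟨e, b, by rw [hbb]; exact hb', hb⟩, rfl⟩
  obtain ⟨M, hM, hle⟩ := Ideal.exists_le_maximal _ hne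
  refine ⟨M, hM, fun hcM => hM.ne_top ?_⟩
  have h1 : e ∈ M := hle (Ideal.subset_span rfl)
  have h2 : algebraMap ℝ B r ∈ M := by
    have := M.add_mem h1 (M.mul_mem_left (star c) hcM)
    simpa [he] using this
  rw [Ideal.eq_top_iff_one]
  have h3 := M.mul_mem_left (algebraMap ℝ B r⁻¹) h2
  rwa [← map_mul, inv_mul_cancel₀ hr0, map_one] at h3

/-- The primitive ideal of a maximal left ideal is prime. -/
lemma primitive_prime {B : Type*} [Ring B] (M : Ideal B) (hM : M.IsMaximal) (f g : B)
    (h : ∀ y, f * y * g = 0) : (∀ y, f * y ∈ M) ∨ (∀ y, g * y ∈ M) := by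
  by_contra hcon
  push Not at hcon
  obtain ⟨⟨y, hy⟩, a, ha⟩ := hcon
  have htop : M ⊔ Ideal.span {g * a} = ⊤ := by
    by_contra hne
    have := hM.eq_of_le hne le_sup_left
    exact ha (this ▸ (le_sup_right : _ ≤ M ⊔ Ideal.span {g * a}) (Ideal.subset_span rfl))
  have h1 : (1 : B) ∈ M ⊔ Ideal.span {g * a} := by rw [htop]; trivial
  obtain ⟨m, hm, z, hz, hmz⟩ := Submodule.mem_sup.1 h1
  obtain ⟨w, rfl⟩ := Ideal.mem_span_singleton'.1 hz
  apply hy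
  have : f * y = f * y * m := by
    have h2 : f * y * (w * (g * a)) = 0 := by
      have := h (y * w)
      calc f * y * (w * (g * a)) = f * (y * w) * g * a := by noncomm_ring
        _ = 0 := by rw [this, zero_mul]
    calc f * y = f * y * (m + w * (g * a)) := by rw [hmz, mul_one]
      _ = _ := by rw [mul_add, h2, add_zero]
  rw [this]
  exact M.mul_mem_left _ hm

/-- Modulo a primitive ideal of a reduced C*-algebra each self-adjoint element is a scalar. -/
lemma scalar_mod_primitive {B : Type*} [CStarAlgebra B] (H : ∀ x : B, x * x = 0 → x = 0)
    (M : Ideal B) (hM : M.IsMaximal) (h : B) (hh : IsSelfAdjoint h) :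
    ∃ r : ℝ, ∀ y, (h - algebraMap ℝ B r) * y ∈ M := by
  have hMc : IsClosed (M : Set B) := Ideal.IsMaximal.isClosed
  set P : Set B := {a | ∀ y, a * y ∈ M} with hP
  have hPc : IsClosed P := by
    rw [hP, Set.ofPred_forall]
    exact isClosed_iInter fun y => hMc.preimage (continuous_mul_const y)
  let u : ℝ → B := fun r => cfc (fun t : ℝ => max (t - r) 0) h
  let v : ℝ → B := fun r => cfc (fun t : ℝ => max (r - t) 0) h
  have huv : ∀ r, u r ∈ P ∨ v r ∈ P := by
    intro r
    apply primitive_prime M hM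
    have hvu : v r * u r = 0 := by
      simp only [u, v]
      rw [← cfc_mul _ _ h (by fun_prop) (by fun_prop)]
      rw [show (fun t : ℝ => max (r - t) 0 * max (t - r) 0) = fun _ => 0 from ?_]
      · simp
      · funext t
        rcases le_total r t with h1 | h1
        · rw [max_eq_right (by linarith : r - t ≤ 0), zero_mul]
        · rw [max_eq_right (by linarith : t - r ≤ 0), mul_zero]
    intro y
    apply H
    calc u r * y * v r * (u r * y * v r) = u r * y * (v r * u r) * y * v r := by noncomm_ring
      _ = 0 := by rw [hvu]; simp
  have hsub : ∀ r, h - algebraMap ℝ B r = u r - v r := by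
    intro r
    simp only [u, v]
    rw [← cfc_sub _ _ h (by fun_prop) (by fun_prop)]
    rw [show (fun t : ℝ => max (t - r) 0 - max (r - t) 0) = fun t => t - r from ?_]
    · rw [cfc_sub _ _ h (by fun_prop) (by fun_prop), cfc_id' ℝ h, cfc_const r h]
    · funext t
      rcases le_total r t with h1 | h1
      · rw [max_eq_right (by linarith : r - t ≤ 0), max_eq_left (by linarith)]; ring
      · rw [max_eq_right (by linarith : t - r ≤ 0), max_eq_left (by linarith)]; ring
  have huc : Continuous u := by
    refine (LipschitzWith.of_dist_le_mul (K := 1) fun r s => ?_).continuous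
    rw [dist_eq_norm]
    simp only [u]
    rw [← cfc_sub _ _ h (by fun_prop) (by fun_prop)]
    refine norm_cfc_le (by positivity) fun t _ => ?_
    have := abs_max_sub_max_le_abs (t - r) (t - s) 0
    rw [Real.norm_eq_abs, Real.dist_eq, abs_sub_comm r s]
    simpa using this
  have hvc : Continuous v := by
    have : v = fun r => u r - (h - algebraMap ℝ B r) := by
      funext r; rw [hsub]; abel
    rw [this]
    exact huc.sub (continuous_const.sub (algebraMapCLM ℝ B).continuous)
  have hspec : ∀ t ∈ spectrum ℝ h, |t| ≤ ‖h‖ * ‖(1 : B)‖ := fun t ht =>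
    spectrum.norm_le_norm_mul_of_mem ht
  set R := ‖h‖ * ‖(1 : B)‖ with hR
  have hzero : (0 : B) ∈ P := fun y => by simp
  have hu : u R ∈ P := by
    have : u R = 0 := by
      simp only [u]
      rw [← cfc_zero ℝ h]
      exact cfc_congr fun t ht => max_eq_right (by linarith [(abs_le.1 (hspec t ht)).2])
    rw [this]; exact hzero
  have hv : v (-R) ∈ P := by
    have : v (-R) = 0 := by
      simp only [v]
      rw [← cfc_zero ℝ h]
      exact cfc_congr fun t ht => max_eq_right (by linarith [(abs_le.1 (hspec t ht)).1])
    rw [this]; exact hzero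
  obtain ⟨r, -, hr1, hr2⟩ := (isPreconnected_closed_iff.1 (isPreconnected_univ (α := ℝ)))
    (u ⁻¹' P) (v ⁻¹' P) (hPc.preimage huc) (hPc.preimage hvc)
    (fun r _ => huv r) ⟨R, trivial, hu⟩ ⟨-R, trivial, hv⟩
  refine ⟨r, fun y => ?_⟩
  rw [hsub, sub_mul]
  exact M.sub_mem (hr1 y) (hr2 y)

lemma selfAdjoint_central {B : Type*} [CStarAlgebra B] (H : ∀ x : B, x * x = 0 → x = 0)
    (h : B) (hh : IsSelfAdjoint h) (y : B) : h * y = y * h := by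
  by_contra hne
  obtain ⟨M, hM, hc⟩ := exists_maximal_not_mem (h * y - y * h) (sub_ne_zero.2 hne)
  obtain ⟨r, hr⟩ := scalar_mod_primitive H M hM h hh
  apply hc
  have h1 := M.sub_mem (hr y) (M.mul_mem_left y (hr 1))
  have h2 : h * y - y * h
      = (h - algebraMap ℝ B r) * y - y * ((h - algebraMap ℝ B r) * 1) := by
    rw [mul_one, sub_mul, mul_sub, Algebra.commutes r y]; abel
  rw [h2]; exact h1

lemma comm_of_reduced {B : Type*} [CStarAlgebra B] (H : ∀ x : B, x * x = 0 → x = 0)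
    (x y : B) : x * y = y * x := by
  rw [← realPart_add_I_smul_imaginaryPart x, add_mul, mul_add, smul_mul_assoc, mul_smul_comm,
    selfAdjoint_central H _ (realPart x).2, selfAdjoint_central H _ (imaginaryPart x).2]

/-- Kaplansky: a noncommutative C*-algebra has a nonzero element of square zero. -/
lemma exists_sq_zero {A : Type*} [NonUnitalCStarAlgebra A]
    (hnc : ¬ ∀ a b : A, a * b = b * a) : ∃ x : A, x ≠ 0 ∧ x * x = 0 := by
  by_contra hcon
  push Not at hcon
  apply hnc
  have H : ∀ x : Unitization ℂ A, x * x = 0 → x = 0 := by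
    intro x hx
    have h1 : x.fst = 0 := by
      have := congrArg (fun z : Unitization ℂ A => z.fst) hx
      simpa using this
    have h2 : x.snd * x.snd = 0 := by
      have := congrArg (fun z : Unitization ℂ A => z.snd) hx
      simpa [h1] using this
    have h3 : x.snd = 0 := by
      by_contra h
      exact hcon _ h h2
    exact Unitization.ext h1 h3
  intro a b
  have := comm_of_reduced H (a : Unitization ℂ A) (b : Unitization ℂ A)
  rw [← Unitization.inr_mul, ← Unitization.inr_mul] at this
  exact Unitization.inr_injective this

lemma inr_nupow {A : Type*} [NonUnitalCStarAlgebra A] (a : A) (n : ℕ) :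
    ((nupow a (n + 1) : A) : Unitization ℂ A) = (a : Unitization ℂ A) ^ (n + 1) := by
  induction n with
  | zero => simp [nupow]
  | succ k ih => rw [nupow, Unitization.inr_mul, ih, ← pow_succ']

/-- in a non-commutative C*-algebra there exist `a`, `b` with `ab = 0`
but `bⁿaⁿ ≠ 0` for every positive integer `n`. -/
theorem stmt_15 {A : Type*} [NonUnitalCStarAlgebra A]
    (hnc : ¬ ∀ a b : A, a * b = b * a) :
    ∃ a b : A, a * b = 0 ∧ ∀ n : ℕ, 0 < n → nupow b n * nupow a n ≠ 0 := by
  obtain ⟨x, hx0, hxx⟩ := exists_sq_zero hnc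
  have hss : star x * star x = 0 := by rw [← star_mul, hxx, star_zero]
  refine ⟨x * star x, star x + star x * x, ?_, ?_⟩
  · calc x * star x * (star x + star x * x)
        = x * (star x * star x) + x * (star x * star x) * x := by
          simp only [mul_add, mul_assoc]
      _ = 0 := by simp [hss]
  · intro n hn h0
    obtain ⟨k, rfl⟩ : ∃ k, n = k + 1 := ⟨n - 1, by omega⟩
    have h1 := congrArg (fun z : A => (z : Unitization ℂ A)) h0
    simp only [Unitization.inr_mul, inr_nupow, Unitization.inr_add, Unitization.inr_star,
      Unitization.inr_zero] at h1
    set X : Unitization ℂ A := (x : Unitization ℂ A) with hX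
    have hXX : X * X = 0 := by rw [hX, ← Unitization.inr_mul, hxx, Unitization.inr_zero]
    have hSS : star X * star X = 0 := by rw [← star_mul, hXX, star_zero]
    have hX0 : X ≠ 0 := fun h => hx0 (Unitization.inr_injective (h.trans (Unitization.inr_zero ℂ).symm))
    set p := star X * X with hp
    have hSp : star X * p = 0 := by rw [hp, ← mul_assoc, hSS, zero_mul]
    have hpX : p * X = 0 := by rw [hp, mul_assoc, hXX, mul_zero]
    have hb : ∀ k, (star X + p) ^ (k + 1) = p ^ k * star X + p ^ (k + 1) := by
      intro k
      induction k with
      | zero => simp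
      | succ k ih =>
        rw [pow_succ, ih, add_mul, mul_add, mul_add, mul_assoc _ (star X) (star X), hSS,
          mul_assoc _ (star X) p, hSp, mul_zero, zero_add, zero_add, ← pow_succ]
    have ha : ∀ k, star X * (X * star X) ^ k = p ^ k * star X := by
      intro k
      induction k with
      | zero => simp
      | succ k ih =>
        rw [pow_succ, ← mul_assoc, ih, pow_succ, hp]
        simp only [mul_assoc]
    have hz : p ^ (k + 1) * (X * star X) ^ (k + 1) = 0 := by
      rw [pow_succ p, pow_succ' (X * star X)]
      calc p ^ k * p * (X * star X * (X * star X) ^ k)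
          = p ^ k * (p * X) * (star X * (X * star X) ^ k) := by noncomm_ring
        _ = 0 := by rw [hpX]; simp
    rw [hb, add_mul, hz, add_zero, mul_assoc, ha] at h1
    have h2 : p ^ (k + (k + 1) + 1) = 0 := by
      calc p ^ (k + (k + 1) + 1) = p ^ k * (p ^ (k + 1) * star X) * X := by
            rw [pow_succ, pow_add]; simp only [hp, mul_assoc]
        _ = 0 := by rw [h1, zero_mul]
    have hpsa : IsSelfAdjoint p := IsSelfAdjoint.star_mul_self X
    have hpow : ∀ m : ℕ, p ^ m ≠ 0 → p ^ (2 * m) ≠ 0 := by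
      intro m hm h
      apply hm
      rw [← CStarRing.star_mul_self_eq_zero_iff, (hpsa.pow m).star_eq, ← pow_add, ← two_mul, h]
    have hp2 : ∀ m : ℕ, p ^ (2 ^ m) ≠ 0 := by
      intro m
      induction m with
      | zero =>
        rw [pow_zero, pow_one, hp]
        exact fun h => hX0 ((CStarRing.star_mul_self_eq_zero_iff X).1 h)
      | succ m ih => rw [pow_succ']; exact hpow _ ih
    exact hp2 _ (pow_eq_zero_of_le (Nat.lt_two_pow_self).le h2)
end
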